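/- arXiv:math/0405393 — 3 statements merged into one kernel-verified Lean document; each statement's English description precedes it below -/
import Mathlib

section
/- For every prime number q and every integer d ≥ 1, every continuous map f : Δ^{(d+1)(q-1)} → ℝ^d admits a Tverberg partition, i.e. there exist q pairwise disjoint nonempty subsets S_1, …, S_q of Fin ((d+1)*(q-1)+1) with ⋂_{i=1}^q f(σ_{S_i}) ≠ ∅. -/
open scoped BigOperators

noncomputable section

/-- Euclidean space `ℝ^d`. -/
abbrev Euc (d : ℕ) : Type := EuclideanSpace ℝ (Fin d)

/-- The standard `N`-simplex `Δ^N ⊆ ℝ^{N+1}`. -/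
def stdSimp (N : ℕ) : Set (Fin (N+1) → ℝ) :=
  {x | (∀ i, 0 ≤ x i) ∧ ∑ i, x i = 1}

/-- The face `σ_S` of `Δ^N` spanned by the vertices in `S`. -/
def simpFace {N : ℕ} (S : Finset (Fin (N+1))) : Set (Fin (N+1) → ℝ) :=
  {x ∈ stdSimp N | ∀ i ∉ S, x i = 0}

/-- The `k`-skeleton `Δ_k^N` of the standard `N`-simplex. -/
def skel (N k : ℕ) : Set (Fin (N+1) → ℝ) :=
  {x ∈ stdSimp N | {i | x i ≠ 0}.ncard ≤ k + 1}

/-- A Tverberg partition for (the relevant restriction of) `f`: a set of `q`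
pairwise disjoint nonempty vertex subsets whose faces have images with a common point. -/
def IsTverbergPartition (q : ℕ) {N d : ℕ}
    (f : (Fin (N+1) → ℝ) → Euc d) (P : Finset (Finset (Fin (N+1)))) : Prop :=
  P.card = q ∧ (∀ S ∈ P, S.Nonempty) ∧
  (∀ S ∈ P, ∀ T ∈ P, S ≠ T → Disjoint S T) ∧
  (⋂ S ∈ P, f '' simpFace S).Nonempty

namespace ListChain

section Complex

variable {R : Type*} [CommRing R] {X Y : Type*}

/-- Prepending a vertex `a` to every simplex of a chain of ordered simplices (lists of vertices). -/
def cone (a : X) : (List X →₀ R) →ₗ[R] (List X →₀ R) :=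
  Finsupp.lmapDomain R R (List.cons a)

/-- The augmented boundary of an ordered simplex. -/
def bdList : List X → (List X →₀ R)
  | [] => 0
  | a :: l => Finsupp.single l 1 - cone a (bdList l)

/-- The boundary operator of the augmented ordered chain complex. -/
def bd : (List X →₀ R) →ₗ[R] (List X →₀ R) :=
  Finsupp.linearCombination R bdList

/-- The map on chains induced by a map of vertices. -/
def push (g : X → Y) : (List X →₀ R) →ₗ[R] (List Y →₀ R) :=
  Finsupp.lmapDomain R R (List.map g)

@[simp] lemma cone_single (a : X) (l : List X) (r : R) :
    cone a (Finsupp.single l r) = Finsupp.single (a :: l) r := by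
  simp [cone]

@[simp] lemma push_single (g : X → Y) (l : List X) (r : R) :
    push g (Finsupp.single l r) = Finsupp.single (l.map g) r := by
  simp [push]

@[simp] lemma bd_single_one (l : List X) :
    bd (Finsupp.single l (1 : R)) = bdList l := by
  simp [bd]

/-- A submodule containing all simplices of `A` contains all chains supported in `A`. -/
lemma mem_of_supported {A : Set (List X)} {W : Submodule R (List X →₀ R)}
    (h : ∀ l ∈ A, Finsupp.single l 1 ∈ W) {c : List X →₀ R}
    (hc : c ∈ Finsupp.supported R R A) : c ∈ W := by
  rw [Finsupp.supported_eq_span_single] at hc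
  refine (Submodule.span_le.2 ?_) hc
  rintro _ ⟨l, hl, rfl⟩
  exact h l hl

lemma map_mem_of_supported {A : Set (List X)} {M : Type*} [AddCommMonoid M] [Module R M]
    {W : Submodule R M} {Φ : (List X →₀ R) →ₗ[R] M}
    (h : ∀ l ∈ A, Φ (Finsupp.single l 1) ∈ W) {c : List X →₀ R}
    (hc : c ∈ Finsupp.supported R R A) : Φ c ∈ W :=
  mem_of_supported (W := W.comap Φ) h hc

lemma map_eq_of_supported {A : Set (List X)} {M : Type*} [AddCommMonoid M] [Module R M]
    {Φ Ψ : (List X →₀ R) →ₗ[R] M}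
    (h : ∀ l ∈ A, Φ (Finsupp.single l 1) = Ψ (Finsupp.single l 1)) {c : List X →₀ R}
    (hc : c ∈ Finsupp.supported R R A) : Φ c = Ψ c :=
  mem_of_supported (W := LinearMap.eqLocus Φ Ψ) h hc

lemma map_eq_of_single {M : Type*} [AddCommMonoid M] [Module R M]
    {Φ Ψ : (List X →₀ R) →ₗ[R] M}
    (h : ∀ l, Φ (Finsupp.single l 1) = Ψ (Finsupp.single l 1)) : Φ = Ψ :=
  LinearMap.ext fun _ => map_eq_of_supported (A := Set.univ) (fun l _ => h l) (by simp)

lemma cone_mem_supported {A B : Set (List X)} {a : X} (h : ∀ l ∈ A, a :: l ∈ B)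
    {c : List X →₀ R} (hc : c ∈ Finsupp.supported R R A) :
    cone a c ∈ Finsupp.supported R R B :=
  map_mem_of_supported (fun l hl => by
    rw [cone_single]; exact Finsupp.single_mem_supported R _ (h l hl)) hc

lemma push_mem_supported {A : Set (List X)} {B : Set (List Y)} {g : X → Y}
    (h : ∀ l ∈ A, l.map g ∈ B) {c : List X →₀ R} (hc : c ∈ Finsupp.supported R R A) :
    push g c ∈ Finsupp.supported R R B :=
  map_mem_of_supported (fun l hl => by
    rw [push_single]; exact Finsupp.single_mem_supported R _ (h l hl)) hc

lemma bd_cone (a : X) (c : List X →₀ R) : bd (cone a c) = c - cone a (bd c) := by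
  have : bd ∘ₗ cone a = LinearMap.id - cone a ∘ₗ (bd (R := R)) :=
    map_eq_of_single fun l => by simp [bdList]
  exact LinearMap.congr_fun this c

lemma bd_bdList (l : List X) : bd (bdList l : List X →₀ R) = 0 := by
  induction l with
  | nil => simp [bdList]
  | cons a l ih => simp [bdList, bd_cone, ih]

lemma bd_bd (c : List X →₀ R) : bd (bd c) = 0 := by
  have : bd ∘ₗ bd (R := R) (X := X) = 0 :=
    map_eq_of_single fun l => by simp [bd_bdList]
  exact LinearMap.congr_fun this c

lemma push_cone (g : X → Y) (a : X) (c : List X →₀ R) :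
    push g (cone a c) = cone (g a) (push g c) := by
  have : push g ∘ₗ cone a = cone (g a) ∘ₗ push (R := R) g :=
    map_eq_of_single fun l => by simp
  exact LinearMap.congr_fun this c

lemma push_bdList (g : X → Y) (l : List X) :
    push g (bdList l : List X →₀ R) = bdList (l.map g) := by
  induction l with
  | nil => simp [bdList]
  | cons a l ih => simp [bdList, push_cone, ih]

lemma bd_push (g : X → Y) (c : List X →₀ R) : bd (push g c) = push g (bd c) := by
  have : bd ∘ₗ push g = push g ∘ₗ bd (R := R) (X := X) :=
    map_eq_of_single fun l => by simp [push_bdList]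
  exact LinearMap.congr_fun this c

lemma push_pow (g : X → X) (n : ℕ) :
    (push g : Module.End R (List X →₀ R)) ^ n = push g^[n] := by
  induction n with
  | zero => exact map_eq_of_single fun l => by simp
  | succ n ih =>
    rw [pow_succ', ih, Function.iterate_succ']
    exact map_eq_of_single fun l => by simp [Module.End.mul_apply]

/-- The boundary of a simplex is a combination of its facets. -/
lemma bdList_mem_supported (l : List X) :
    (bdList l : List X →₀ R) ∈
      Finsupp.supported R R {m | m.Sublist l ∧ m.length + 1 = l.length} := by
  induction l with
  | nil => simp [bdList]
  | cons a l ih =>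
    refine Submodule.sub_mem _ ?_ (cone_mem_supported ?_ ih)
    · exact Finsupp.single_mem_supported R _ ⟨List.sublist_cons_self a l, rfl⟩
    · rintro m ⟨h, hlen⟩
      exact ⟨h.cons_cons a, by simp [hlen]⟩

/-- The degenerate simplices, with a repeated consecutive vertex, are closed under the boundary. -/
lemma bdList_degenerate {l : List X} (hl : ¬ l.IsChain (· ≠ ·)) :
    (bdList l : List X →₀ R) ∈ Finsupp.supported R R {m | ¬ m.IsChain (· ≠ ·)} := by
  induction l with
  | nil => simp at hl
  | cons a l ih =>
    have hcone : ∀ (c : List X →₀ R), c ∈ Finsupp.supported R R {m | ¬ m.IsChain (· ≠ ·)} →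
        cone a c ∈ Finsupp.supported R R {m | ¬ m.IsChain (· ≠ ·)} := by
      intro c hc
      refine cone_mem_supported ?_ hc
      intro m hm h
      exact hm h.of_cons
    by_cases h : l.IsChain (· ≠ ·)
    · cases l with
      | nil => simp at hl
      | cons b l =>
        obtain rfl : a = b := by
          by_contra hab
          exact hl (List.isChain_cons_cons.2 ⟨hab, h⟩)
        have : (bdList (a :: a :: l) : List X →₀ R) = cone a (cone a (bdList l)) := by
          simp [bdList]
        rw [this]
        have h2 : cone a (cone a (bdList l : List X →₀ R)) =
            (cone a ∘ₗ cone a) (bdList l) := rfl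
        rw [h2]
        refine map_mem_of_supported (A := Set.univ) (fun m _ => ?_) (by simp)
        simp only [LinearMap.comp_apply, cone_single]
        exact Finsupp.single_mem_supported R _ (by simp)
    · exact Submodule.sub_mem _ (Finsupp.single_mem_supported R _ h) (hcone _ (ih h))

end Complex

section Subdivision

variable {R : Type*} [CommRing R] {X Y : Type*}

/-- Subdivision of ordered simplices, placing the apex `b l` over each simplex `l`; the natural
number bounds the depth of the recursion. -/
def sdList (b : List X → Y) : ℕ → List X → (List Y →₀ R)
  | 0, _ => Finsupp.single [] 1
  | n + 1, l => cone (b l) (Finsupp.linearCombination R (sdList b n) (bdList l))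

/-- The subdivision chain map with apex function `b`. -/
def sd (b : List X → Y) : (List X →₀ R) →ₗ[R] (List Y →₀ R) :=
  Finsupp.linearCombination R fun l => sdList b l.length l

lemma sd_nil (b : List X → Y) :
    sd b (Finsupp.single [] (1 : R)) = Finsupp.single [] 1 := by
  simp [sd, sdList]

lemma sd_single (b : List X → Y) {l : List X} (hl : l ≠ []) :
    sd b (Finsupp.single l (1 : R)) = cone (b l) (sd b (bdList l)) := by
  obtain ⟨n, hn⟩ := Nat.exists_eq_succ_of_ne_zero (mt List.length_eq_zero_iff.1 hl)
  have h : Finsupp.linearCombination R (sdList (R := R) b n) (bdList l) = sd b (bdList l) := by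
    refine map_eq_of_supported (fun m hm => ?_) (bdList_mem_supported l)
    obtain rfl : m.length = n := by have := hm.2; omega
    simp [sd]
  rw [← h]
  simp [sd, hn, sdList]

lemma bd_sd_bdList (b : List X → Y) (n : ℕ) : ∀ l : List X, l.length = n →
    bd (sd b (Finsupp.single l (1 : R))) = sd b (bdList l) := by
  induction n with
  | zero =>
    intro l hl
    rw [List.length_eq_zero_iff] at hl
    subst hl
    simp [sd_nil, bdList]
  | succ n ih =>
    intro l hl
    have hne : l ≠ [] := by rintro rfl; simp at hl
    have key : bd (sd b (bdList l : List X →₀ R)) = sd b (bd (bdList l)) := by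
      refine map_eq_of_supported (Φ := bd ∘ₗ sd b) (Ψ := sd (R := R) b ∘ₗ bd) (fun m hm => ?_)
        (bdList_mem_supported l)
      simpa using ih m (by have := hm.2; omega)
    rw [sd_single b hne, bd_cone, key, bd_bdList]
    simp

lemma bd_sd (b : List X → Y) (c : List X →₀ R) : bd (sd b c) = sd b (bd c) := by
  have : bd ∘ₗ sd b = sd b ∘ₗ bd (R := R) (X := X) :=
    map_eq_of_single fun l => by simpa using bd_sd_bdList b _ l rfl
  exact LinearMap.congr_fun this c

/-- Subdivision is equivariant on a family of simplices closed under faces on which the apex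
function is equivariant. -/
lemma sd_push {b : List X → Y} {g : X → X} {g' : Y → Y} {A : Set (List X)}
    (hA : ∀ l ∈ A, ∀ m, m.Sublist l → m ∈ A)
    (hb : ∀ l ∈ A, l ≠ [] → b (l.map g) = g' (b l)) {c : List X →₀ R}
    (hc : c ∈ Finsupp.supported R R A) : sd b (push g c) = push g' (sd b c) := by
  have key : ∀ n, ∀ l ∈ A, l.length = n → sd b (push g (Finsupp.single l (1 : R))) =
      push g' (sd b (Finsupp.single l 1)) := by
    intro n
    induction n with
    | zero =>
      intro l _ hl
      rw [List.length_eq_zero_iff] at hl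
      subst hl
      simp [sd_nil]
    | succ n ih =>
      intro l hlA hl
      have hne : l ≠ [] := by rintro rfl; simp at hl
      rw [push_single, sd_single b (by simpa using hne), sd_single b hne, push_cone,
        hb l hlA hne, ← push_bdList]
      congr 1
      refine map_eq_of_supported (Φ := sd b ∘ₗ push g) (Ψ := push g' ∘ₗ sd (R := R) b)
        (fun m hm => ?_) (bdList_mem_supported l)
      exact ih m (hA l hlA m hm.1) (by have := hm.2; omega)
  exact map_eq_of_supported (Φ := sd b ∘ₗ push g) (Ψ := push g' ∘ₗ sd (R := R) b)
    (fun l hl => key _ l hl rfl) hc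

/-- Control of the simplices occurring in a subdivision: their vertices lie in a monotone hull
`H`, and any two of them satisfy a relation `S` holding between apexes and hull points. -/
lemma sd_mem_supported {b : List X → Y} {A : Set (List X)} {H : List X → Set Y}
    {S : Y → Y → Prop} (hA : ∀ l ∈ A, ∀ m, m.Sublist l → m ∈ A)
    (hmem : ∀ l ∈ A, l ≠ [] → b l ∈ H l)
    (hmono : ∀ l m : List X, m.Sublist l → H m ⊆ H l)
    (hrel : ∀ l ∈ A, l ≠ [] → ∀ y ∈ H l, S (b l) y) {l : List X} (hl : l ∈ A) :
    sd b (Finsupp.single l (1 : R)) ∈ Finsupp.supported R R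
      {m | (∀ y ∈ m, y ∈ H l) ∧ m.Pairwise S ∧ m.length = l.length} := by
  have key : ∀ n, ∀ l ∈ A, l.length = n → sd b (Finsupp.single l (1 : R)) ∈
      Finsupp.supported R R
        {m | (∀ y ∈ m, y ∈ H l) ∧ m.Pairwise S ∧ m.length = l.length} := by
    intro n
    induction n with
    | zero =>
      intro l _ hl
      rw [List.length_eq_zero_iff] at hl
      subst hl
      rw [sd_nil]
      exact Finsupp.single_mem_supported R _ (by simp)
    | succ n ih =>
      intro l hlA hl
      have hne : l ≠ [] := by rintro rfl; simp at hl
      rw [sd_single b hne]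
      have hbd : sd b (bdList l : List X →₀ R) ∈ Finsupp.supported R R
          {m | (∀ y ∈ m, y ∈ H l) ∧ m.Pairwise S ∧ m.length + 1 = l.length} := by
        refine map_mem_of_supported (fun m hm => ?_) (bdList_mem_supported l)
        refine Finsupp.supported_mono ?_
          (ih m (hA l hlA m hm.1) (by have := hm.2; omega))
        rintro m' ⟨h1, h2, h3⟩
        exact ⟨fun y hy => hmono l m hm.1 (h1 y hy), h2, by have := hm.2; omega⟩
      refine cone_mem_supported ?_ hbd
      rintro m ⟨h1, h2, h3⟩
      refine ⟨?_, ?_, by simpa using h3⟩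
      · intro y hy
        rcases List.mem_cons.1 hy with rfl | hy
        · exact hmem l hlA hne
        · exact h1 y hy
      · exact List.pairwise_cons.2 ⟨fun y hy => hrel l hlA hne y (h1 y hy), h2⟩
  exact key _ l hl rfl

lemma sd_mem_supported_length (b : List X → Y) {k : ℕ} {c : List X →₀ R}
    (hc : c ∈ Finsupp.supported R R {l | l.length = k}) :
    sd b c ∈ Finsupp.supported R R {l | l.length = k} := by
  refine map_mem_of_supported (fun l hl => ?_) hc
  refine Finsupp.supported_mono ?_ (sd_mem_supported (A := Set.univ) (H := fun _ => Set.univ)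
    (S := fun _ _ => True) (by simp) (by simp) (by simp) (by simp) (Set.mem_univ l))
  rintro m ⟨-, -, h⟩
  exact h.trans hl

end Subdivision

section Cyclic

/-- The differentials `1, 1 - γ, 1 + γ + ⋯ + γ ^ (q - 1), 1 - γ, …` of the augmented periodic
resolution of a cyclic group of order `q`. -/
def cyclicDiff {A : Type*} [Ring A] (q : ℕ) (γ : A) : ℕ → A
  | 0 => 1
  | k + 1 => if Even k then 1 - γ else ∑ i ∈ Finset.range q, γ ^ i

lemma cyclicDiff_add_two {A : Type*} [Ring A] (q : ℕ) (γ : A) (k : ℕ) :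
    cyclicDiff q γ (k + 3) = cyclicDiff q γ (k + 1) := by
  simp [cyclicDiff, Nat.even_add]

lemma cyclicDiff_mul {A : Type*} [Ring A] (q : ℕ) (γ : A) (h : γ ^ q = 1) (k : ℕ) :
    cyclicDiff q γ (k + 2) * cyclicDiff q γ (k + 1) = 0 := by
  by_cases hk : Even k
  · simp [cyclicDiff, Nat.even_add_one, hk, geom_sum_mul_neg, h]
  · simp [cyclicDiff, Nat.even_add_one, hk, mul_neg_geom_sum, h]

lemma cyclicDiff_mem_and_map {R M N : Type*} [CommRing R] [AddCommGroup M] [AddCommGroup N]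
    [Module R M] [Module R N] (q : ℕ) {γ : Module.End R M} {γ' : Module.End R N}
    {Φ : M →ₗ[R] N} {W : Submodule R M} (hW : ∀ x ∈ W, γ x ∈ W)
    (hΦ : ∀ x ∈ W, Φ (γ x) = γ' (Φ x)) (k : ℕ) {x : M} (hx : x ∈ W) :
    cyclicDiff q γ k x ∈ W ∧ Φ (cyclicDiff q γ k x) = cyclicDiff q γ' k (Φ x) := by
  have hpow : ∀ i, (γ ^ i) x ∈ W ∧ Φ ((γ ^ i) x) = (γ' ^ i) (Φ x) := by
    intro i
    induction i with
    | zero => simpa using hx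
    | succ i ih =>
      rw [pow_succ', pow_succ', Module.End.mul_apply, Module.End.mul_apply]
      exact ⟨hW _ ih.1, by rw [hΦ _ ih.1, ih.2]⟩
  cases k with
  | zero => simpa [cyclicDiff] using hx
  | succ k =>
    by_cases hk : Even k
    · simp only [cyclicDiff, hk, if_true, LinearMap.sub_apply, Module.End.one_apply, map_sub]
      exact ⟨W.sub_mem hx (hW _ hx), by rw [hΦ _ hx]⟩
    · simp only [cyclicDiff, hk, if_false, LinearMap.sum_apply, map_sum]
      exact ⟨W.sum_mem fun i _ => (hpow i).1, Finset.sum_congr rfl fun i _ => (hpow i).2⟩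

lemma bd_cyclicDiff_push {R X : Type*} [CommRing R] (q : ℕ) (g : X → X) (k : ℕ)
    (c : List X →₀ R) :
    bd (cyclicDiff q (push g) k c) = cyclicDiff q (push g) k (bd c) :=
  (cyclicDiff_mem_and_map (W := ⊤) q (by simp) (fun x _ => bd_push g x) k trivial).2

variable {q : ℕ} [NeZero q] {P : Type*}

/-- A cochain killed by one differential of the periodic resolution factors through the next,
provided that the action on vertices has a phase function. -/
lemma exists_factor_cyclicDiff (g : P → P) (r : P → ZMod q) (hr : ∀ x, r (g x) = r x + 1)
    (k : ℕ) (φ : (List P →₀ ZMod q) →ₗ[ZMod q] ZMod q)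
    (hnil : φ (Finsupp.single [] 1) = 0)
    (hdeg : ∀ l : List P, ¬ l.IsChain (· ≠ ·) → φ (Finsupp.single l 1) = 0)
    (hφ : φ ∘ₗ cyclicDiff q (push g) (k + 2) = 0) :
    ∃ ψ : (List P →₀ ZMod q) →ₗ[ZMod q] ZMod q,
      (∀ l : List P, ¬ l.IsChain (· ≠ ·) → ψ (Finsupp.single l 1) = 0) ∧
      ψ ∘ₗ cyclicDiff q (push g) (k + 1) = φ := by
  have hg : ∀ (i : ℕ) (l : List P), ¬ l.IsChain (· ≠ ·) →
      ¬ (l.map g^[i]).IsChain (· ≠ ·) := by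
    intro i l hl h
    rw [List.isChain_map] at h
    exact hl (h.imp fun a b hab e => hab (by rw [e]))
  have hri : ∀ (i : ℕ) x, r (g^[i] x) = r x + i := by
    intro i x
    induction i with
    | zero => simp
    | succ i ih => rw [Function.iterate_succ_apply', hr, ih]; push_cast; ring
  by_cases hk : Even k
  · have hφ' : ∀ l : List P,
        ∑ i ∈ Finset.range q, φ (Finsupp.single (l.map g^[i]) 1) = 0 := by
      intro l
      have := LinearMap.congr_fun hφ (Finsupp.single l 1)
      simpa [cyclicDiff, Nat.even_add_one, hk, push_pow] using this
    let ψ : List P → ZMod q := fun l => match l with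
      | [] => 0
      | a :: l => ∑ i ∈ Finset.range (q - (r a).val), φ (Finsupp.single ((a :: l).map g^[i]) 1)
    refine ⟨Finsupp.linearCombination _ ψ, fun l hl => ?_, map_eq_of_single fun l => ?_⟩
    · cases l with
      | nil => simp at hl
      | cons a l =>
        simp only [Finsupp.linearCombination_single, one_smul, ψ]
        exact Finset.sum_eq_zero fun i _ => hdeg _ (hg i _ hl)
    · cases l with
      | nil => simp [cyclicDiff, hk, hnil]
      | cons a l =>
        simp only [cyclicDiff, hk, if_true, LinearMap.comp_apply, LinearMap.sub_apply,
          Module.End.one_apply, map_sub, push_single, Finsupp.linearCombination_single, one_smul,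
          ψ, List.map_cons]
        have hshift : ∀ i, φ (Finsupp.single (g^[i] (g a) :: (l.map g).map g^[i]) 1) =
            φ (Finsupp.single ((a :: l).map g^[i + 1]) 1) := by
          intro i
          simp [Function.iterate_succ]
        simp only [hshift, hr]
        have hlt := ZMod.val_lt (r a)
        by_cases hlast : (r a).val + 1 = q
        · have h0 : r a + 1 = 0 := by
            have : (((r a).val + 1 : ℕ) : ZMod q) = 0 := by rw [hlast]; simp
            simpa using this
          have h1 : q - (r a).val = 1 := by omega
          have h2 := hφ' ((a :: l).map g)
          simp only [List.map_map, ← Function.iterate_succ] at h2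
          rw [h0, h1, ZMod.val_zero, Nat.sub_zero, h2]
          simp
        · have h0 : (r a + 1).val = (r a).val + 1 := by
            have h3 : r a + 1 = (((r a).val + 1 : ℕ) : ZMod q) := by simp
            rw [h3, ZMod.val_natCast, Nat.mod_eq_of_lt (by omega)]
          have h1 : q - (r a).val = (q - ((r a).val + 1)) + 1 := by omega
          rw [h0, h1, Finset.sum_range_succ']
          simp
  · have hφ' : ∀ l : List P, φ (Finsupp.single (l.map g) 1) = φ (Finsupp.single l 1) := by
      intro l
      have := LinearMap.congr_fun hφ (Finsupp.single l 1)
      simp only [cyclicDiff, Nat.even_add_one, hk, not_false_eq_true, if_true,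
        LinearMap.comp_apply, LinearMap.sub_apply, Module.End.one_apply, map_sub, push_single,
        LinearMap.zero_apply] at this
      exact (sub_eq_zero.1 this).symm
    have hφi : ∀ (i : ℕ) (l : List P),
        φ (Finsupp.single (l.map g^[i]) 1) = φ (Finsupp.single l 1) := by
      intro i l
      induction i with
      | zero => simp
      | succ i ih => rw [Function.iterate_succ', ← List.map_map, hφ', ih]
    let ψ : List P → ZMod q := fun l => match l with
      | [] => 0
      | a :: l => if r a = 0 then φ (Finsupp.single (a :: l) 1) else 0
    refine ⟨Finsupp.linearCombination _ ψ, fun l hl => ?_, map_eq_of_single fun l => ?_⟩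
    · cases l with
      | nil => simp at hl
      | cons a l => simp [ψ, hdeg _ hl]
    · cases l with
      | nil => simp [cyclicDiff, hk, hnil, push_pow, ψ]
      | cons a l =>
        have hterm : ∀ i, ψ (g^[i] a :: l.map g^[i]) =
            if r a + i = 0 then φ (Finsupp.single (a :: l) 1) else 0 := by
          intro i
          simp only [ψ, hri]
          rw [← List.map_cons, hφi]
        simp only [cyclicDiff, hk, if_false, LinearMap.comp_apply, LinearMap.sum_apply, push_pow,
          push_single, map_sum, Finsupp.linearCombination_single, one_smul, List.map_cons, hterm]
        rw [Finset.sum_eq_single (-(r a)).val]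
        · simp
        · intro i hi hne
          rw [if_neg]
          intro h
          apply hne
          rw [← eq_neg_of_add_eq_zero_right h, ZMod.val_natCast,
            Nat.mod_eq_of_lt (Finset.mem_range.1 hi)]
        · intro h
          exact absurd (Finset.mem_range.2 (ZMod.val_lt _)) h

/-- A sequence of chains with the boundary relations of the periodic resolution is detected by
cochains vanishing on degenerate simplices. -/
lemma exists_cochain (g : P → P) (r : P → ZMod q) (hr : ∀ x, r (g x) = r x + 1)
    (z : ℕ → List P →₀ ZMod q) (hz0 : z 0 = Finsupp.single [] 1)
    (k : ℕ) (hz : ∀ j ≤ k, bd (z (j + 1)) = cyclicDiff q (push g) j (z j)) :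
    ∃ φ : (List P →₀ ZMod q) →ₗ[ZMod q] ZMod q, φ (z (k + 1)) = 1 ∧ φ ∘ₗ bd = 0 ∧
      φ (Finsupp.single [] 1) = 0 ∧
      (∀ l : List P, ¬ l.IsChain (· ≠ ·) → φ (Finsupp.single l 1) = 0) ∧
      φ ∘ₗ cyclicDiff q (push g) (k + 2) = 0 := by
  have hvanish : ∀ ψ : (List P →₀ ZMod q) →ₗ[ZMod q] ZMod q,
      (∀ l : List P, ¬ l.IsChain (· ≠ ·) → ψ (Finsupp.single l 1) = 0) →
      ∀ l : List P, ¬ l.IsChain (· ≠ ·) → (ψ ∘ₗ bd) (Finsupp.single l 1) = 0 := by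
    intro ψ hψ l hl
    rw [LinearMap.comp_apply, bd_single_one]
    exact map_eq_of_supported (Ψ := 0) hψ (bdList_degenerate hl)
  induction k with
  | zero =>
    let ε : (List P →₀ ZMod q) →ₗ[ZMod q] ZMod q := Finsupp.lapply []
    refine ⟨ε ∘ₗ bd, ?_, ?_, ?_, hvanish ε ?_, ?_⟩
    · simp [hz, hz0, cyclicDiff, ε]
    · ext1 l; ext; simp [bd_bdList]
    · simp [bdList]
    · intro l hl
      have : l ≠ [] := by rintro rfl; simp at hl
      simp [ε, this]
    · refine LinearMap.ext fun c => ?_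
      have hε : ∀ (i : ℕ) c, ε (push g^[i] c) = ε c := by
        intro i c
        refine LinearMap.congr_fun (f := ε ∘ₗ push g^[i]) (g := ε) ?_ c
        refine map_eq_of_single fun l => ?_
        cases l <;> simp [ε]
      rw [LinearMap.comp_apply, LinearMap.comp_apply, bd_cyclicDiff_push]
      simp [cyclicDiff, push_pow, hε]
  | succ k ih =>
    obtain ⟨φ, h1, h2, h3, h4, h5⟩ := ih fun j hj => hz j (by omega)
    obtain ⟨ψ, hψ, hψφ⟩ := exists_factor_cyclicDiff g r hr k φ h3 h4 h5
    refine ⟨ψ ∘ₗ bd, ?_, ?_, ?_, hvanish ψ hψ, ?_⟩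
    · rw [LinearMap.comp_apply, hz _ le_rfl, ← LinearMap.comp_apply, hψφ, h1]
    · exact LinearMap.ext fun c => by simp [bd_bd]
    · simp [bdList]
    · refine LinearMap.ext fun c => ?_
      rw [LinearMap.comp_apply, LinearMap.comp_apply, bd_cyclicDiff_push, cyclicDiff_add_two,
        ← LinearMap.comp_apply, hψφ, ← LinearMap.comp_apply, h2]

end Cyclic

section Faces

variable {q : ℕ} {κ : Type*}

/-- The faces of the join of copies, indexed by `κ`, of the boundary of the simplex with vertex
set `ZMod q`. -/
abbrev JoinFace (q : ℕ) (κ : Type*) [NeZero q] : Type _ :=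
  {A : κ → Finset (ZMod q) // (∀ k, A k ≠ Finset.univ) ∧ ∃ k, (A k).Nonempty}

/-- The cyclic shift of a family of subsets of `ZMod q`. -/
def rotSets (A : κ → Finset (ZMod q)) : κ → Finset (ZMod q) :=
  fun k => (A k).map (Equiv.addRight (1 : ZMod q)).toEmbedding

lemma rotSets_proper [NeZero q] {A : κ → Finset (ZMod q)}
    (h : (∀ k, A k ≠ Finset.univ) ∧ ∃ k, (A k).Nonempty) :
    (∀ k, rotSets A k ≠ Finset.univ) ∧ ∃ k, (rotSets A k).Nonempty := by
  refine ⟨fun k hk => h.1 k ?_, ?_⟩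
  · rw [← Finset.card_eq_iff_eq_univ] at hk ⊢
    simpa [rotSets] using hk
  · obtain ⟨k, hk⟩ := h.2
    exact ⟨k, by simpa [rotSets] using hk⟩

/-- The cyclic shift on faces. -/
def rotFace [NeZero q] (A : JoinFace q κ) : JoinFace q κ :=
  ⟨rotSets A.1, rotSets_proper A.2⟩

/-- For prime `q` the cyclic shift acts freely on faces, as witnessed by a phase function: the
mean of the first nonempty block. -/
lemma exists_phase [Fact q.Prime] :
    ∃ r : JoinFace q κ → ZMod q, ∀ A, r (rotFace A) = r A + 1 := by
  classical
  let blk : JoinFace q κ → κ := fun A =>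
    @Classical.epsilon κ ⟨A.2.2.choose⟩ fun k => (A.1 k).Nonempty
  refine ⟨fun A => (∑ i ∈ A.1 (blk A), i) / ((A.1 (blk A)).card : ZMod q), fun A => ?_⟩
  have hblk : blk (rotFace A) = blk A := by
    simp [blk, rotFace, rotSets]
  have hne : (A.1 (blk A)).Nonempty := @Classical.epsilon_spec κ _ A.2.2
  have hcard : ((A.1 (blk A)).card : ZMod q) ≠ 0 := by
    rw [Ne, ZMod.natCast_eq_zero_iff]
    refine Nat.not_dvd_of_pos_of_lt hne.card_pos ?_
    have := (Finset.card_lt_iff_ne_univ _).2 (A.2.1 (blk A))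
    rwa [ZMod.card] at this
  simp only [hblk]
  simp only [rotFace, rotSets, Finset.sum_map, Finset.card_map]
  simp only [Equiv.coe_toEmbedding, Equiv.coe_addRight, Finset.sum_add_distrib]
  field_simp
  simp

/-- A weakly decreasing list of faces that is longer than the number of possible sizes of a face
has a repetition. -/
lemma not_isChain_of_length [Fintype κ] [NeZero q] {l : List (JoinFace q κ)}
    (hl : l.Pairwise (· ≥ ·)) (hlen : l.length = Fintype.card κ * (q - 1) + 1) :
    ¬ l.IsChain (· ≠ ·) := by
  intro hne
  let rk : JoinFace q κ → ℕ := fun A => ∑ k, (A.1 k).card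
  have hrk : ∀ A B : JoinFace q κ, A > B → rk A > rk B := by
    intro A B h
    have h' : B.1 < A.1 := h
    obtain ⟨hle, k, hk⟩ := Pi.lt_def.1 h'
    exact Finset.sum_lt_sum (fun i _ => Finset.card_le_card (hle i))
      ⟨k, Finset.mem_univ _, Finset.card_lt_card hk⟩
  have hgt : l.Pairwise (· > ·) := by
    rw [← List.isChain_iff_pairwise]
    have h := hl.isChain
    clear hlen hl
    induction l with
    | nil => simp
    | cons a l ih =>
      cases l with
      | nil => simp
      | cons b l =>
        rw [List.isChain_cons_cons] at h hne ⊢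
        exact ⟨lt_of_le_of_ne h.1 hne.1.symm, ih hne.2 h.2⟩
  have hmap : (l.map rk).Nodup := by
    rw [List.Nodup, List.pairwise_map]
    exact hgt.imp fun {A B} h => (hrk A B h).ne'
  have hsub : (l.map rk).toFinset ⊆ Finset.Icc 1 (Fintype.card κ * (q - 1)) := by
    intro n hn
    simp only [List.mem_toFinset, List.mem_map] at hn
    obtain ⟨A, -, rfl⟩ := hn
    rw [Finset.mem_Icc]
    constructor
    · obtain ⟨k, hk⟩ := A.2.2
      exact hk.card_pos.trans_le
        (Finset.single_le_sum (f := fun k => (A.1 k).card) (fun _ _ => Nat.zero_le _)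
          (Finset.mem_univ k))
    · calc rk A ≤ ∑ _k : κ, (q - 1) := by
            refine Finset.sum_le_sum fun k _ => ?_
            have := (Finset.card_lt_iff_ne_univ _).2 (A.2.1 k)
            rw [ZMod.card] at this
            omega
        _ = _ := by simp
  have := Finset.card_le_card hsub
  rw [List.toFinset_card_of_nodup hmap] at this
  simp [hlen] at this

end Faces

section Barycenter

variable {E : Type*} [NormedAddCommGroup E] [NormedSpace ℝ E]

/-- The barycenter of a list of points. -/
def bary (l : List E) : E := (l.length : ℝ)⁻¹ • l.sum

lemma bary_eq_sum (l : List E) : bary l = ∑ i : Fin l.length, (l.length : ℝ)⁻¹ • l[i] := by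
  rw [bary, ← Finset.smul_sum]
  congr 1
  exact (Fin.sum_univ_getElem l).symm

lemma bary_mem_convexHull {l : List E} (hl : l ≠ []) : bary l ∈ convexHull ℝ {x | x ∈ l} := by
  have h0 : (l.length : ℝ) ≠ 0 := by simpa using hl
  rw [bary_eq_sum]
  refine (convex_convexHull ℝ _).sum_mem (fun _ _ => by positivity) ?_ fun i _ => ?_
  · simp [h0]
  · exact subset_convexHull ℝ _ (List.getElem_mem _)

lemma dist_bary_le {l : List E} {n : ℕ} (hn : l.length ≤ n + 1) {D : ℝ} (hD : 0 ≤ D)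
    (hl : ∀ x ∈ l, ∀ y ∈ l, dist x y ≤ D) {x : E} (hx : x ∈ convexHull ℝ {x | x ∈ l}) :
    dist (bary l) x ≤ n / (n + 1) * D := by
  suffices h : {x | x ∈ l} ⊆ Metric.closedBall (bary l) (n / (n + 1) * D) by
    have := convexHull_min h (convex_closedBall _ _) hx
    rwa [Metric.mem_closedBall, dist_comm] at this
  intro v hv
  obtain ⟨i, hi, rfl⟩ := List.getElem_of_mem hv
  have hpos : 0 < (l.length : ℝ) := by exact_mod_cast (by omega : 0 < l.length)
  have hv' : l[i] = ∑ _j : Fin l.length, (l.length : ℝ)⁻¹ • l[i] := by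
    simp [smul_smul, ← Nat.cast_smul_eq_nsmul ℝ, hpos.ne']
  rw [Metric.mem_closedBall, dist_comm, dist_eq_norm, bary_eq_sum, hv', ← Finset.sum_sub_distrib]
  calc ‖∑ j : Fin l.length, ((l.length : ℝ)⁻¹ • l[j] - (l.length : ℝ)⁻¹ • l[i])‖
      ≤ ∑ j : Fin l.length, ‖(l.length : ℝ)⁻¹ • l[j] - (l.length : ℝ)⁻¹ • l[i]‖ :=
        norm_sum_le _ _
    _ = (l.length : ℝ)⁻¹ * ∑ j : Fin l.length, dist l[j] l[i] := by
        rw [Finset.mul_sum]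
        refine Finset.sum_congr rfl fun j _ => ?_
        rw [← smul_sub, norm_smul, dist_eq_norm, Real.norm_of_nonneg (by positivity)]
    _ ≤ (l.length : ℝ)⁻¹ * ((l.length - 1) * D) := by
        gcongr
        rw [← Finset.add_sum_erase _ _ (Finset.mem_univ (⟨i, hi⟩ : Fin l.length))]
        have : ∑ j ∈ Finset.univ.erase (⟨i, hi⟩ : Fin l.length), dist l[j] l[i] ≤
            ∑ _j ∈ Finset.univ.erase (⟨i, hi⟩ : Fin l.length), D :=
          Finset.sum_le_sum fun j _ => hl _ (List.getElem_mem _) _ (List.getElem_mem _)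
        rw [Finset.sum_const, Finset.card_erase_of_mem (Finset.mem_univ _), Finset.card_univ,
          Fintype.card_fin, nsmul_eq_mul, Nat.cast_sub (by omega)] at this
        simpa using this
    _ ≤ n / (n + 1) * D := by
        rw [← mul_assoc]
        gcongr
        have h1 : (l.length : ℝ) ≤ n + 1 := by exact_mod_cast hn
        rw [inv_mul_eq_div, div_le_div_iff₀ hpos (by positivity)]
        nlinarith

end Barycenter

section Shift

variable {q n : ℕ}

/-- The cyclic shift of rows. -/
def shift (y : ZMod q → Fin n → ℝ) : ZMod q → Fin n → ℝ := fun i => y (i - 1)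

/-- The vertices of the `n`-fold join of `ZMod q`. -/
def vertex (i : ZMod q) (j : Fin n) : ZMod q → Fin n → ℝ := Pi.single i (Pi.single j 1)

lemma shift_vertex (i : ZMod q) (j : Fin n) : shift (vertex i j) = vertex (i + 1) j := by
  funext k
  simp only [shift, vertex, Pi.single_apply, sub_eq_iff_eq_add]

lemma shift_iterate (m : ℕ) (y : ZMod q → Fin n → ℝ) :
    shift^[m] y = fun i => y (i - m) := by
  induction m with
  | zero => simp
  | succ m ih =>
    rw [Function.iterate_succ_apply', ih]
    funext i
    simp only [shift]
    congr 1
    push_cast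
    ring

lemma push_shift_pow : (push shift : Module.End (ZMod q)
    (List (ZMod q → Fin n → ℝ) →₀ ZMod q)) ^ q = 1 := by
  rw [push_pow]
  refine map_eq_of_single fun l => ?_
  have : (shift^[q] : (ZMod q → Fin n → ℝ) → _) = id := by
    funext y
    rw [shift_iterate]
    simp
  simp [this]

end Shift

section Cells

variable {q n : ℕ} [NeZero q]

/-- The cell of the `n`-fold join of `ZMod q` on which the `j`-th point is `c j`. -/
def cell (c : Fin n → ZMod q) : Set (ZMod q → Fin n → ℝ) :=
  {y | (∀ i j, 0 ≤ y i j) ∧ (∀ i j, c j ≠ i → y i j = 0) ∧ ∑ i, ∑ j, y i j = 1}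

lemma convex_cell (c : Fin n → ZMod q) : Convex ℝ (cell c) := by
  rintro x ⟨hx1, hx2, hx3⟩ y ⟨hy1, hy2, hy3⟩ a b ha hb hab
  refine ⟨fun i j => ?_, fun i j h => ?_, ?_⟩
  · have := hx1 i j
    have := hy1 i j
    simp only [Pi.add_apply, Pi.smul_apply, smul_eq_mul]
    positivity
  · simp [hx2 i j h, hy2 i j h]
  · simp [Finset.sum_add_distrib, ← Finset.mul_sum, hx3, hy3, hab]

lemma cell_subset_Icc (c : Fin n → ZMod q) : cell c ⊆ Set.Icc 0 1 := by
  rintro y ⟨h1, -, h3⟩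
  refine ⟨fun i j => h1 i j, fun i j => ?_⟩
  calc y i j ≤ ∑ j, y i j := Finset.single_le_sum (fun j _ => h1 i j) (Finset.mem_univ j)
    _ ≤ ∑ i, ∑ j, y i j :=
      Finset.single_le_sum (f := fun i => ∑ j, y i j)
        (fun i _ => Finset.sum_nonneg fun j _ => h1 i j) (Finset.mem_univ i)
    _ = 1 := h3

lemma isCompact_cell (c : Fin n → ZMod q) : IsCompact (cell c) := by
  refine isCompact_Icc.of_isClosed_subset ?_ (cell_subset_Icc c)
  have : cell c = (⋂ i, ⋂ j, {y | 0 ≤ y i j}) ∩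
      ((⋂ i, ⋂ j, ⋂ _ : c j ≠ i, {y | y i j = 0}) ∩ {y | ∑ i, ∑ j, y i j = 1}) := by
    ext y
    simp [cell]
  rw [this]
  refine IsClosed.inter ?_ (IsClosed.inter ?_ ?_)
  · exact isClosed_iInter fun i => isClosed_iInter fun j =>
      isClosed_le continuous_const (by fun_prop)
  · exact isClosed_iInter fun i => isClosed_iInter fun j => isClosed_iInter fun _ =>
      isClosed_eq (by fun_prop) continuous_const
  · exact isClosed_eq (by fun_prop) continuous_const

lemma dist_le_one_of_mem_cell {c : Fin n → ZMod q} {x y : ZMod q → Fin n → ℝ}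
    (hx : x ∈ cell c) (hy : y ∈ cell c) : dist x y ≤ 1 := by
  have hx' := cell_subset_Icc c hx
  have hy' := cell_subset_Icc c hy
  refine (dist_pi_le_iff zero_le_one).2 fun i => (dist_pi_le_iff zero_le_one).2 fun j => ?_
  exact Real.dist_le_of_mem_Icc_01 ⟨hx'.1 i j, hx'.2 i j⟩ ⟨hy'.1 i j, hy'.2 i j⟩

lemma vertex_mem_cell (c : Fin n → ZMod q) (j : Fin n) : vertex (c j) j ∈ cell c := by
  classical
  refine ⟨fun i k => ?_, fun i k h => ?_, ?_⟩
  · simp only [vertex, Pi.single_apply]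
    split_ifs <;> simp [Pi.single_apply]
    split_ifs <;> simp
  · simp only [vertex, Pi.single_apply]
    split_ifs with h'
    · rw [Pi.single_apply, if_neg]
      rintro rfl
      exact h h'.symm
    · rfl
  · rw [Finset.sum_eq_single (c j)]
    · simp [vertex]
    · intro i _ hi
      simp [vertex, hi]
    · simp

lemma shift_mem_cell {c : Fin n → ZMod q} {y : ZMod q → Fin n → ℝ} (hy : y ∈ cell c) :
    shift y ∈ cell fun j => c j + 1 := by
  refine ⟨fun i j => hy.1 _ j, fun i j h => hy.2.1 _ j fun h' => h ?_, ?_⟩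
  · simp only [h', sub_add_cancel]
  · rw [← hy.2.2]
    exact Fintype.sum_equiv (Equiv.subRight 1) _ _ fun i => rfl

lemma dist_shift_shift (x y : ZMod q → Fin n → ℝ) : dist (shift x) (shift y) ≤ dist x y :=
  (dist_pi_le_iff dist_nonneg).2 fun i => dist_le_pi_dist x y (i - 1)

lemma bary_map_shift (l : List (ZMod q → Fin n → ℝ)) : bary (l.map shift) = shift (bary l) := by
  have : (l.map shift).sum = shift l.sum := by
    induction l with
    | nil => rfl
    | cons a l ih => rw [List.map_cons, List.sum_cons, List.sum_cons, ih]; rfl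
  rw [bary, this, List.length_map]
  rfl

/-- Simplices with at most `n` vertices, contained in a common cell, of diameter at most `D`. -/
def smallSimplices (q n : ℕ) [NeZero q] (D : ℝ) : Set (List (ZMod q → Fin n → ℝ)) :=
  {l | l.length ≤ n ∧ (∃ c, ∀ x ∈ l, x ∈ cell c) ∧ ∀ x ∈ l, ∀ y ∈ l, dist x y ≤ D}

lemma smallSimplices_sublist {D : ℝ} :
    ∀ l ∈ smallSimplices q n D, ∀ m, m.Sublist l → m ∈ smallSimplices q n D := by
  rintro l ⟨h1, ⟨c, hc⟩, h3⟩ m hm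
  exact ⟨hm.length_le.trans h1, ⟨c, fun x hx => hc x (hm.subset hx)⟩,
    fun x hx y hy => h3 x (hm.subset hx) y (hm.subset hy)⟩

lemma smallSimplices_shift {D : ℝ} :
    ∀ l ∈ smallSimplices q n D, l.map shift ∈ smallSimplices q n D := by
  rintro l ⟨h1, ⟨c, hc⟩, h3⟩
  refine ⟨by simpa using h1, ⟨fun j => c j + 1, ?_⟩, ?_⟩
  · simp only [List.mem_map]
    rintro _ ⟨x, hx, rfl⟩
    exact shift_mem_cell (hc x hx)
  · simp only [List.mem_map]
    rintro _ ⟨x, hx, rfl⟩ _ ⟨y, hy, rfl⟩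
    exact (dist_shift_shift x y).trans (h3 x hx y hy)

/-- Barycentric subdivision shrinks simplices. -/
lemma sd_bary_mem_smallSimplices {R : Type*} [CommRing R] {D : ℝ} (hD : 0 ≤ D)
    {z : List (ZMod q → Fin (n + 1) → ℝ) →₀ R}
    (hz : z ∈ Finsupp.supported R R (smallSimplices q (n + 1) D)) :
    sd bary z ∈ Finsupp.supported R R (smallSimplices q (n + 1) (n / (n + 1) * D)) := by
  refine map_mem_of_supported (fun l hl => ?_) hz
  refine Finsupp.supported_mono ?_ (sd_mem_supported (A := smallSimplices q (n + 1) D)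
    (H := fun l => convexHull ℝ {x | x ∈ l}) (S := fun x y => dist x y ≤ n / (n + 1) * D)
    smallSimplices_sublist (fun l _ h => bary_mem_convexHull h)
    (fun l m h => convexHull_mono fun x hx => h.subset hx)
    (fun l hl _ y hy => dist_bary_le hl.1 hD hl.2.2 hy) hl)
  rintro m ⟨h1, h2, h3⟩
  obtain ⟨c, hc⟩ := hl.2.1
  refine ⟨h3.trans_le hl.1, ⟨c, fun x hx => convexHull_min hc (convex_cell c) (h1 x hx)⟩, ?_⟩
  intro x hx y hy
  refine h2.forall_of_forall_of_flip (fun x _ => ?_) (h2.imp fun h => ?_) hx hy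
  · rw [dist_self]
    positivity
  · rwa [flip, dist_comm]

lemma sd_bary_iterate_mem {R : Type*} [CommRing R]
    {z : List (ZMod q → Fin (n + 1) → ℝ) →₀ R}
    (hz : z ∈ Finsupp.supported R R (smallSimplices q (n + 1) 1)) (m : ℕ) :
    (sd bary)^[m] z ∈
      Finsupp.supported R R (smallSimplices q (n + 1) ((n / (n + 1) : ℝ) ^ m)) := by
  induction m with
  | zero => simpa using hz
  | succ m ih =>
    rw [Function.iterate_succ_apply', pow_succ']
    exact sd_bary_mem_smallSimplices (by positivity) ih

/-- Chains on the join realizing the periodic resolution. -/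
def joinChain (q n : ℕ) [NeZero q] : ℕ → (List (ZMod q → Fin (n + 1) → ℝ) →₀ ZMod q)
  | 0 => Finsupp.single [] 1
  | k + 1 => cone (vertex 0 (Fin.ofNat (n + 1) k)) (cyclicDiff q (push shift) k (joinChain q n k))

lemma bd_joinChain (k : ℕ) :
    bd (joinChain q n (k + 1)) = cyclicDiff q (push shift) k (joinChain q n k) := by
  induction k with
  | zero => simp [joinChain, cyclicDiff, bdList]
  | succ k ih =>
    rw [joinChain, bd_cone, bd_cyclicDiff_push, ih]
    suffices h : cyclicDiff q (push shift) (k + 1)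
        (cyclicDiff q (push shift) k (joinChain q n k)) = 0 by simp [h]
    cases k with
    | zero => simp [joinChain, cyclicDiff]
    | succ k =>
      rw [← Module.End.mul_apply, cyclicDiff_mul _ _ push_shift_pow]
      rfl

lemma joinChain_mem (k : ℕ) (hk : k ≤ n + 1) :
    joinChain q n k ∈ Finsupp.supported (ZMod q) (ZMod q)
      {l | l.length = k ∧ ∃ c : Fin (n + 1) → ZMod q,
        ∀ x ∈ l, ∃ j : Fin (n + 1), j.val < k ∧ x = vertex (c j) j} := by
  induction k with
  | zero => exact Finsupp.single_mem_supported _ _ (by simp)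
  | succ k ih =>
    have hk' := ih (by omega)
    set A : ℕ → Set (List (ZMod q → Fin (n + 1) → ℝ)) := fun k =>
      {l | l.length = k ∧ ∃ c : Fin (n + 1) → ZMod q,
        ∀ x ∈ l, ∃ j : Fin (n + 1), j.val < k ∧ x = vertex (c j) j}
    have hpush : ∀ x ∈ Finsupp.supported (ZMod q) (ZMod q) (A k),
        push shift x ∈ Finsupp.supported (ZMod q) (ZMod q) (A k) := by
      intro x hx
      refine push_mem_supported ?_ hx
      rintro l ⟨h1, c, hc⟩
      refine ⟨by simpa using h1, fun j => c j + 1, ?_⟩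
      simp only [List.mem_map]
      rintro _ ⟨x, hx, rfl⟩
      obtain ⟨j, hj, rfl⟩ := hc x hx
      exact ⟨j, hj, shift_vertex _ _⟩
    have hmem := (cyclicDiff_mem_and_map (γ' := push shift) (Φ := LinearMap.id) q hpush
      (fun _ _ => rfl) k hk').1
    refine cone_mem_supported (A := A k) (B := A (k + 1)) ?_ hmem
    rintro l ⟨h1, c, hc⟩
    refine ⟨by simp [h1], fun j => if j.val < k then c j else 0, fun x hx => ?_⟩
    rcases List.mem_cons.1 hx with rfl | hx
    · have : (Fin.ofNat (n + 1) k).val = k := by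
        simp [Fin.ofNat, Nat.mod_eq_of_lt (show k < n + 1 by omega)]
      exact ⟨Fin.ofNat (n + 1) k, by omega, by simp only [this, lt_irrefl, if_false]⟩
    · obtain ⟨j, hj, rfl⟩ := hc x hx
      exact ⟨j, by omega, by simp [hj]⟩

lemma joinChain_mem_smallSimplices (k : ℕ) (hk : k ≤ n + 1) :
    joinChain q n k ∈ Finsupp.supported (ZMod q) (ZMod q) (smallSimplices q (n + 1) 1) := by
  refine Finsupp.supported_mono ?_ (joinChain_mem k hk)
  rintro l ⟨h1, c, hc⟩
  have hcell : ∀ x ∈ l, x ∈ cell c := by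
    intro x hx
    obtain ⟨j, -, rfl⟩ := hc x hx
    exact vertex_mem_cell c j
  exact ⟨h1.trans_le hk, ⟨c, hcell⟩,
    fun x hx y hy => dist_le_one_of_mem_cell (hcell x hx) (hcell y hy)⟩

lemma sd_bary_iterate_nil {R : Type*} [CommRing R] (m : ℕ) :
    (sd bary)^[m] (Finsupp.single ([] : List (ZMod q → Fin n → ℝ)) (1 : R)) =
      Finsupp.single [] 1 :=
  Function.iterate_fixed (sd_nil _) m

lemma bd_sd_bary_iterate_joinChain (m k : ℕ) :
    bd ((sd bary)^[m] (joinChain q n (k + 1))) =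
      cyclicDiff q (push shift) k ((sd bary)^[m] (joinChain q n k)) := by
  induction m with
  | zero => exact bd_joinChain k
  | succ m ih =>
    rw [Function.iterate_succ_apply', Function.iterate_succ_apply', bd_sd, ih]
    exact (cyclicDiff_mem_and_map (W := ⊤) q (by simp) (fun x _ =>
      sd_push (A := Set.univ) (by simp) (fun l _ _ => bary_map_shift l) (by simp)) k trivial).2

lemma sd_bary_iterate_joinChain_length (m k : ℕ) (hk : k ≤ n + 1) :
    (sd bary)^[m] (joinChain q n k) ∈
      Finsupp.supported (ZMod q) (ZMod q) {l | l.length = k} := by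
  induction m with
  | zero => exact Finsupp.supported_mono (fun l hl => hl.1) (joinChain_mem k hk)
  | succ m ih =>
    rw [Function.iterate_succ_apply']
    exact sd_mem_supported_length _ ih

end Cells

section Coincidence

variable {q n : ℕ} {κ : Type*}

/-- The indices at which some coordinate of `F` is maximal over a vertex of `l`, and exceeds the
value at some other index by at least `ε`. -/
def peaks [NeZero q] (F : (ZMod q → Fin n → ℝ) → ZMod q → κ → ℝ) (ε : ℝ)
    (l : List (ZMod q → Fin n → ℝ)) : κ → Finset (ZMod q) :=
  open Classical in fun k => {i | ∃ y ∈ l, (∀ i', F y i' k ≤ F y i k) ∧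
    ∃ i', F y i' k + ε ≤ F y i k}

lemma mem_peaks [NeZero q] {F : (ZMod q → Fin n → ℝ) → ZMod q → κ → ℝ} {ε : ℝ}
    {l : List (ZMod q → Fin n → ℝ)} {k : κ} {i : ZMod q} :
    i ∈ peaks F ε l k ↔ ∃ y ∈ l, (∀ i', F y i' k ≤ F y i k) ∧ ∃ i', F y i' k + ε ≤ F y i k := by
  simp [peaks]

lemma peaks_mono [NeZero q] {F : (ZMod q → Fin n → ℝ) → ZMod q → κ → ℝ} {ε : ℝ}
    {l m : List (ZMod q → Fin n → ℝ)} (h : m.Sublist l) : peaks F ε m ≤ peaks F ε l := by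
  intro k i hi
  rw [mem_peaks] at hi ⊢
  obtain ⟨y, hy, h'⟩ := hi
  exact ⟨y, h.subset hy, h'⟩

lemma peaks_shift [NeZero q] {F : (ZMod q → Fin n → ℝ) → ZMod q → κ → ℝ}
    (hF : ∀ y i, F (shift y) i = F y (i - 1)) {ε : ℝ} (l : List (ZMod q → Fin n → ℝ)) :
    peaks F ε (l.map shift) = rotSets (peaks F ε l) := by
  funext k
  ext i
  simp only [rotSets, Finset.mem_map_equiv, mem_peaks, List.mem_map, exists_exists_and_eq_and, hF,
    Equiv.addRight_symm, Equiv.coe_addRight, ← sub_eq_add_neg]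
  refine exists_congr fun y => and_congr_right fun _ => and_congr ?_ ?_
  · exact ⟨fun h i' => by simpa using h (i' + 1), fun h i' => h (i' - 1)⟩
  · exact ⟨fun ⟨i', h⟩ => ⟨i' - 1, h⟩, fun ⟨i', h⟩ => ⟨i' + 1, by simpa using h⟩⟩

/-- On a small simplex, the peaks form a face of the join of boundaries of simplices. -/
lemma peaks_proper [NeZero q] {F : (ZMod q → Fin n → ℝ) → ZMod q → κ → ℝ} {ε : ℝ}
    {l : List (ZMod q → Fin n → ℝ)} (hne : l ≠ [])
    (hspread : ∀ y ∈ l, ∃ i i' k, F y i' k + ε ≤ F y i k)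
    (hclose : ∀ x ∈ l, ∀ y ∈ l, ∀ i k, |F x i k - F y i k| < ε / 2) :
    (∀ k, peaks F ε l k ≠ Finset.univ) ∧ ∃ k, (peaks F ε l k).Nonempty := by
  constructor
  · intro k hk
    have hall : ∀ i, i ∈ peaks F ε l k := fun i => hk ▸ Finset.mem_univ i
    obtain ⟨y, hy, -, i', h'⟩ := mem_peaks.1 (hall 0)
    obtain ⟨x, hx, hmax, -⟩ := mem_peaks.1 (hall i')
    have h1 := abs_lt.1 (hclose x hx y hy 0 k)
    have h2 := abs_lt.1 (hclose x hx y hy i' k)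
    linarith [hmax 0, h1.1, h2.2]
  · obtain ⟨y, hy⟩ := List.exists_mem_of_ne_nil l hne
    obtain ⟨i, i', k, h⟩ := hspread y hy
    obtain ⟨i₀, hi₀⟩ := Finite.exists_max fun i => F y i k
    exact ⟨k, i₀, mem_peaks.2 ⟨y, hy, hi₀, i', h.trans (hi₀ i)⟩⟩

/-- A Borsuk–Ulam type theorem: an equivariant map from the `(m (q - 1) + 1)`-fold join of `ZMod q`
to `m` copies of the regular representation meets the fixed points. -/
theorem exists_coincidence [Fact q.Prime] [Fintype κ] (hn : n = Fintype.card κ * (q - 1))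
    {F : (ZMod q → Fin (n + 1) → ℝ) → ZMod q → κ → ℝ} (hF : Continuous F)
    (hequiv : ∀ y i, F (shift y) i = F y (i - 1)) :
    ∃ c : Fin (n + 1) → ZMod q, ∃ y ∈ cell c, ∀ i i', F y i = F y i' := by
  classical
  by_contra hcon
  push Not at hcon
  let K : Set (ZMod q → Fin (n + 1) → ℝ) := ⋃ c, cell c
  have hK : IsCompact K := isCompact_iUnion isCompact_cell
  have hKne : K.Nonempty := ⟨_, Set.mem_iUnion.2 ⟨0, vertex_mem_cell 0 0⟩⟩
  obtain ⟨ε, hε, hspread⟩ : ∃ ε > 0, ∀ y ∈ K, ∃ i i' k, F y i' k + ε ≤ F y i k := by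
    have hcont : Continuous fun y => dist (F y) fun i => F y (i + 1) := by fun_prop
    obtain ⟨y₀, hy₀, hmin⟩ := hK.exists_isMinOn hKne hcont.continuousOn
    have hpos : 0 < dist (F y₀) fun i => F y₀ (i + 1) := by
      rw [dist_pos]
      intro h
      obtain ⟨c, hc⟩ := Set.mem_iUnion.1 hy₀
      obtain ⟨i, i', hne⟩ := hcon c y₀ hc
      have hstep : ∀ m : ℕ, F y₀ (m : ZMod q) = F y₀ 0 := by
        intro m
        induction m with
        | zero => simp
        | succ m ih => rw [← ih, Nat.cast_succ]; exact (congr_fun h m).symm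
      apply hne
      rw [← ZMod.natCast_zmod_val i, ← ZMod.natCast_zmod_val i', hstep, hstep]
    refine ⟨_, hpos, fun y hy => ?_⟩
    have hle : dist (F y₀) (fun i => F y₀ (i + 1)) ≤ dist (F y) fun i => F y (i + 1) := hmin hy
    set ε := dist (F y₀) fun i => F y₀ (i + 1)
    by_contra hno
    push Not at hno
    refine absurd hle (not_le.2 ?_)
    refine (dist_pi_lt_iff hpos).2 fun i => (dist_pi_lt_iff hpos).2 fun k => ?_
    rw [Real.dist_eq, abs_lt]
    constructor <;> linarith [hno i (i + 1) k, hno (i + 1) i k]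
  obtain ⟨δ, hδ, hclose⟩ := Metric.uniformContinuousOn_iff.1
    (hK.uniformContinuousOn_of_continuous hF.continuousOn) (ε / 2) (by positivity)
  obtain ⟨m, hm⟩ := exists_pow_lt_of_lt_one hδ
    (show (n / (n + 1) : ℝ) < 1 by rw [div_lt_one (by positivity)]; linarith)
  set D : ℝ := (n / (n + 1) : ℝ) ^ m
  have hproper : ∀ l ∈ smallSimplices q (n + 1) D, l ≠ [] →
      (∀ k, peaks F ε l k ≠ Finset.univ) ∧ ∃ k, (peaks F ε l k).Nonempty := by
    rintro l ⟨-, ⟨c, hc⟩, hdist⟩ hne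
    have hlK : ∀ x ∈ l, x ∈ K := fun x hx => Set.mem_iUnion.2 ⟨c, hc x hx⟩
    refine peaks_proper hne (fun y hy => hspread y (hlK y hy)) fun x hx y hy i k => ?_
    have h := hclose x (hlK x hx) y (hlK y hy) ((hdist x hx y hy).trans_lt hm)
    exact ((dist_le_pi_dist (F x i) (F y i) k).trans (dist_le_pi_dist (F x) (F y) i)).trans_lt h
  obtain ⟨l₀, hl₀, hl₀ne⟩ : ∃ l ∈ smallSimplices q (n + 1) D, l ≠ [] := by
    refine ⟨[vertex 0 0], ⟨by simp, ⟨0, ?_⟩, ?_⟩, by simp⟩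
    · simpa using vertex_mem_cell (0 : Fin (n + 1) → ZMod q) 0
    · simp only [List.mem_singleton, forall_eq, dist_self]
      positivity
  let b : List (ZMod q → Fin (n + 1) → ℝ) → JoinFace q κ := fun l =>
    if h : (∀ k, peaks F ε l k ≠ Finset.univ) ∧ ∃ k, (peaks F ε l k).Nonempty then ⟨_, h⟩
    else ⟨_, hproper l₀ hl₀ hl₀ne⟩
  have hb : ∀ l ∈ smallSimplices q (n + 1) D, l ≠ [] → (b l).1 = peaks F ε l := by
    intro l hl hne
    simp only [b, dif_pos (hproper l hl hne)]
  have hb_shift : ∀ l ∈ smallSimplices q (n + 1) D, l ≠ [] →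
      b (l.map shift) = rotFace (b l) := by
    intro l hl hne
    apply Subtype.ext
    rw [hb _ (smallSimplices_shift l hl) (by simpa using hne), peaks_shift hequiv, ← hb l hl hne]
    rfl
  let w : ℕ → (List (ZMod q → Fin (n + 1) → ℝ) →₀ ZMod q) := fun k =>
    (sd bary)^[m] (joinChain q n k)
  have hw_mem : ∀ k ≤ n + 1, w k ∈ Finsupp.supported (ZMod q) (ZMod q)
      (smallSimplices q (n + 1) D) := fun k hk =>
    sd_bary_iterate_mem (joinChain_mem_smallSimplices k hk) m
  obtain ⟨r, hr⟩ := exists_phase (q := q) (κ := κ)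
  obtain ⟨φ, hφ, -, -, hdeg, -⟩ := exists_cochain rotFace r hr (fun k => sd b (w k))
    (by simp only [w, joinChain, sd_bary_iterate_nil, sd_nil]) n (by
      intro k hk
      rw [bd_sd, bd_sd_bary_iterate_joinChain]
      exact (cyclicDiff_mem_and_map q (fun x hx => push_mem_supported smallSimplices_shift hx)
        (fun x hx => sd_push smallSimplices_sublist hb_shift hx) k (hw_mem k (by omega))).2)
  have hsupp : sd b (w (n + 1)) ∈ Finsupp.supported (ZMod q) (ZMod q)
      {l | ¬ l.IsChain (· ≠ ·)} := by
    have hw : w (n + 1) ∈ Finsupp.supported (ZMod q) (ZMod q)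
        (smallSimplices q (n + 1) D ∩ {l | l.length = n + 1}) := by
      rw [Finsupp.supported_inter]
      exact ⟨hw_mem _ le_rfl, sd_bary_iterate_joinChain_length m _ le_rfl⟩
    refine map_mem_of_supported (fun l hl => ?_) hw
    refine Finsupp.supported_mono ?_ (sd_mem_supported (A := smallSimplices q (n + 1) D)
      (H := fun l => {B | B.1 ≤ peaks F ε l}) (S := (· ≥ ·)) smallSimplices_sublist
      (fun l hl hne => (hb l hl hne).le) (fun l m h B hB => le_trans hB (peaks_mono h))
      (fun l hl hne B hB => Subtype.coe_le_coe.1 (by rw [hb l hl hne]; exact hB)) hl.1)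
    rintro z ⟨-, hz, hlen⟩
    exact not_isChain_of_length hz (by rw [hlen, ← hn]; exact hl.2)
  have hzero : φ (sd b (w (n + 1))) = 0 := map_eq_of_supported (Ψ := 0) hdeg hsupp
  exact one_ne_zero (hφ.symm.trans hzero)

end Coincidence

end ListChain

/-- **Topological Tverberg theorem for primes.** -/
theorem topological_tverberg_prime (q d : ℕ) (hq : q.Prime) (hd : 1 ≤ d)
    (f : (Fin ((d+1)*(q-1)+1) → ℝ) → Euc d)
    (hf : ContinuousOn f (stdSimp ((d+1)*(q-1)))) :
    ∃ P : Finset (Finset (Fin ((d+1)*(q-1)+1))), IsTverbergPartition q f P := by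
  have : Fact q.Prime := ⟨hq⟩
  generalize hN : (d + 1) * (q - 1) = N at f hf ⊢
  have hclosed : IsClosed (stdSimp N) := by
    have : stdSimp N = (⋂ i, {x | 0 ≤ x i}) ∩ {x | ∑ i, x i = 1} := by
      ext x
      simp [stdSimp]
    rw [this]
    exact (isClosed_iInter fun i => isClosed_le continuous_const (by fun_prop)).inter
      (isClosed_eq (by fun_prop) continuous_const)
  have : TietzeExtension (Euc d) := TietzeExtension.of_tvs ℝ
  obtain ⟨h, hh⟩ := ContinuousMap.exists_restrict_eq hclosed
    ⟨(stdSimp N).domRestrict f, hf.domRestrict⟩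
  have hhf : ∀ x ∈ stdSimp N, h x = f x := fun x hx => DFunLike.congr_fun hh ⟨x, hx⟩
  let F : (ZMod q → Fin (N + 1) → ℝ) → ZMod q → Option (Fin d) → ℝ := fun y i k =>
    match k with
    | none => ∑ j, y i j
    | some k => h ((q : ℝ) • y i) k
  have hF : Continuous F := by
    refine continuous_pi fun i => continuous_pi fun k => ?_
    cases k with
    | none => simp only [F]; fun_prop
    | some k => simp only [F]; fun_prop
  obtain ⟨c, y, ⟨hy0, hyc, hy1⟩, hy⟩ := ListChain.exists_coincidence (n := N) (F := F)
    (by simp [← hN]) hF (fun y i => rfl)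
  have hrow : ∀ i, ∑ j, ((q : ℝ) • y i) j = 1 := by
    intro i
    have hall : ∀ i', ∑ j, y i' j = ∑ j, y i j := fun i' => congr_fun (hy i' i) none
    simp only [hall, Finset.sum_const, Finset.card_univ, ZMod.card, nsmul_eq_mul] at hy1
    simpa [← Finset.mul_sum] using hy1
  let S : ZMod q → Finset (Fin (N + 1)) := fun i => {j | c j = i}
  have hface : ∀ i, (q : ℝ) • y i ∈ simpFace (S i) := by
    intro i
    refine ⟨⟨fun j => mul_nonneg (Nat.cast_nonneg q) (hy0 i j), hrow i⟩, fun j hj => ?_⟩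
    simp [hyc i j (by simpa [S] using hj)]
  have hne : ∀ i, (S i).Nonempty := by
    intro i
    rw [Finset.nonempty_iff_ne_empty]
    intro hempty
    have h0 : ∑ j, ((q : ℝ) • y i) j = 0 :=
      Finset.sum_eq_zero fun j _ => (hface i).2 j (by simp [hempty])
    exact zero_ne_one (h0.symm.trans (hrow i))
  have hdisj : ∀ i i', i ≠ i' → Disjoint (S i) (S i') := by
    intro i i' hii
    rw [Finset.disjoint_left]
    intro j hj hj'
    simp only [S, Finset.mem_filter_univ] at hj hj'
    exact hii (hj.symm.trans hj')
  have hinj : Function.Injective S := by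
    intro i i' hS
    by_contra hii
    have := hdisj i i' hii
    rw [hS, disjoint_self] at this
    exact (hne i').ne_empty this
  refine ⟨Finset.univ.image S, ?_, ?_, ?_, f ((q : ℝ) • y 0), ?_⟩
  · rw [Finset.card_image_of_injective _ hinj, Finset.card_univ, ZMod.card]
  · simpa using hne
  · simp only [Finset.mem_image, Finset.mem_univ, true_and]
    rintro _ ⟨i, rfl⟩ _ ⟨i', rfl⟩ hS
    exact hdisj i i' fun hii => hS (by rw [hii])
  · simp only [Finset.mem_image, Finset.mem_univ, true_and, Set.iInter_exists, Set.mem_iInter]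
    rintro _ i rfl
    refine ⟨(q : ℝ) • y i, hface i, ?_⟩
    rw [← hhf _ (hface i).1, ← hhf _ (hface 0).1]
    ext k
    exact congr_fun (hy i 0) (some k)
end
end

section
/- If q is a prime number and d ≥ 1, then every continuous map f : Δ^{(d+1)(q-1)} → ℝ^d has at least (1/(q-1)!) · (q/2)^{(d+1)(q-1)/2} Tverberg partitions; i.e. the cardinality of the set of all sets {S_1, …, S_q} that are Tverberg partitions for f is at least (1/(q-1)!) · (q/2)^{((d+1)(q-1))/2}, where the exponent is the real number (d+1)(q-1)/2. -/
open scoped BigOperators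

noncomputable section

namespace Tverberg
open Finsupp

section Chains

variable (R : Type*) [CommRing R] {X Y Z : Type*}

/-- Prepending the vertex `x` to every ordered simplex of a chain. -/
noncomputable def cone (x : X) : (List X →₀ R) →ₗ[R] (List X →₀ R) :=
  lmapDomain R R (List.cons x)

/-- The (augmented) boundary of an ordered simplex, given as a list of vertices. -/
noncomputable def simplexBoundary (l : List X) : List X →₀ R :=
  ∑ i : Fin l.length, (-1 : R) ^ (i : ℕ) • single (l.eraseIdx i) 1

/-- The (augmented) boundary operator on ordered chains. -/
noncomputable def boundary : (List X →₀ R) →ₗ[R] (List X →₀ R) :=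
  linearCombination R (simplexBoundary R)

/-- The barycentric subdivision of an ordered simplex, each face `l` contributing the vertex
`b l`. -/
noncomputable def simplexSubdivision (b : List X → Y) (l : List X) : List Y →₀ R :=
  if l = [] then single [] 1
  else cone R (b l) (∑ i : Fin l.length, (-1 : R) ^ (i : ℕ) • simplexSubdivision b (l.eraseIdx i))
termination_by l.length
decreasing_by
  have := i.2
  rw [List.length_eraseIdx_of_lt i.2]
  omega

/-- The subdivision operator on chains. -/
noncomputable def subdivision (b : List X → Y) : (List X →₀ R) →ₗ[R] (List Y →₀ R) :=
  linearCombination R (simplexSubdivision R b)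

/-- The map on chains induced by a map of vertices. -/
noncomputable def vertexMap (s : X → Y) : (List X →₀ R) →ₗ[R] (List Y →₀ R) :=
  lmapDomain R R (List.map s)

variable {R}

@[simp] lemma cone_single (x : X) (l : List X) (r : R) :
    cone R x (single l r) = single (x :: l) r := by
  simp [cone]

@[simp] lemma vertexMap_single (s : X → Y) (l : List X) (r : R) :
    vertexMap R s (single l r) = single (l.map s) r := by
  simp [vertexMap]

lemma boundary_single (l : List X) : boundary R (single l 1) = simplexBoundary R l := by
  simp [boundary]

lemma subdivision_single (b : List X → Y) (l : List X) :
    subdivision R b (single l 1) = simplexSubdivision R b l := by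
  simp [subdivision]

@[simp] lemma boundary_nil : boundary R (single ([] : List X) 1) = 0 := by
  simp [boundary_single, simplexBoundary]

lemma simplexBoundary_cons (x : X) (l : List X) :
    simplexBoundary R (x :: l) = single l 1 - cone R x (simplexBoundary R l) := by
  simp only [simplexBoundary, List.length_cons, map_sum, map_smul, cone_single]
  rw [Fin.sum_univ_succ, sub_eq_add_neg, ← Finset.sum_neg_distrib]
  congr 1
  · simp
  · refine Finset.sum_congr rfl fun i _ => ?_
    simp [pow_succ]

lemma hom_ext_single {M : Type*} [AddCommGroup M] [Module R M]
    {φ ψ : (List X →₀ R) →ₗ[R] M} (h : ∀ l, φ (single l 1) = ψ (single l 1)) : φ = ψ :=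
  Finsupp.lhom_ext' fun l => LinearMap.ext_ring (by simpa using h l)

lemma boundary_cone (x : X) (c : List X →₀ R) :
    boundary R (cone R x c) = c - cone R x (boundary R c) := by
  have : boundary R ∘ₗ cone R x = LinearMap.id - cone R x ∘ₗ boundary R := by
    refine hom_ext_single fun l => ?_
    simp [boundary_single, simplexBoundary_cons]
  exact LinearMap.congr_fun this c

lemma boundary_boundary (c : List X →₀ R) : boundary R (boundary R c) = 0 := by
  have : boundary R ∘ₗ boundary R = (0 : (List X →₀ R) →ₗ[R] (List X →₀ R)) := by
    refine hom_ext_single fun l => ?_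
    induction l with
    | nil => simp
    | cons x l ih =>
      have h : (single (x :: l) 1 : List X →₀ R) = cone R x (single l 1) := by simp
      simp only [LinearMap.comp_apply, LinearMap.zero_apply] at ih
      simp only [LinearMap.comp_apply, LinearMap.zero_apply, h, boundary_cone, map_sub, ih,
        map_zero, sub_zero, sub_self]
  exact LinearMap.congr_fun this c

lemma cone_vertexMap (s : X → Y) (x : X) (c : List X →₀ R) :
    cone R (s x) (vertexMap R s c) = vertexMap R s (cone R x c) := by
  have : cone R (s x) ∘ₗ vertexMap R s = vertexMap R s ∘ₗ cone R x :=
    hom_ext_single fun l => by simp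
  exact LinearMap.congr_fun this c

lemma boundary_vertexMap (s : X → Y) (c : List X →₀ R) :
    boundary R (vertexMap R s c) = vertexMap R s (boundary R c) := by
  have : boundary R ∘ₗ vertexMap R s = vertexMap R s ∘ₗ boundary R := by
    refine hom_ext_single fun l => ?_
    induction l with
    | nil => simp
    | cons x l ih =>
      have h : (single (x :: l) 1 : List X →₀ R) = cone R x (single l 1) := by simp
      simp only [LinearMap.comp_apply] at ih
      simp only [LinearMap.comp_apply, h, ← cone_vertexMap, boundary_cone, ih, map_sub]
  exact LinearMap.congr_fun this c

lemma vertexMap_vertexMap (s : X → Y) (t : Y → Z) (c : List X →₀ R) :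
    vertexMap R t (vertexMap R s c) = vertexMap R (t ∘ s) c := by
  have : vertexMap R t ∘ₗ vertexMap R s = vertexMap R (t ∘ s) :=
    hom_ext_single fun l => by simp
  exact LinearMap.congr_fun this c

@[simp] lemma subdivision_nil (b : List X → Y) :
    subdivision R b (single ([] : List X) 1) = single [] 1 := by
  rw [subdivision_single, simplexSubdivision, if_pos rfl]

lemma simplexSubdivision_eq (b : List X → Y) {l : List X} (hl : l ≠ []) :
    simplexSubdivision R b l = cone R (b l) (subdivision R b (simplexBoundary R l)) := by
  rw [simplexSubdivision, if_neg hl, simplexBoundary]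
  simp only [map_sum, map_smul, subdivision_single]

lemma boundary_subdivision (b : List X → Y) (c : List X →₀ R) :
    boundary R (subdivision R b c) = subdivision R b (boundary R c) := by
  have key : ∀ n : ℕ, ∀ l : List X, l.length = n →
      boundary R (simplexSubdivision R b l) = subdivision R b (simplexBoundary R l) := by
    intro n
    induction n with
    | zero =>
      intro l hl
      obtain rfl := List.length_eq_zero_iff.1 hl
      simp [← subdivision_single, simplexBoundary]
    | succ n ih =>
      intro l hl
      have hne : l ≠ [] := by rintro rfl; simp at hl
      have h0 : boundary R (subdivision R b (simplexBoundary R l)) = 0 := by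
        have h1 : boundary R (subdivision R b (simplexBoundary R l)) =
            subdivision R b (boundary R (simplexBoundary R l)) := by
          simp only [simplexBoundary, map_sum, map_smul, subdivision_single]
          refine Finset.sum_congr rfl fun i _ => ?_
          rw [ih _ (by rw [List.length_eraseIdx_of_lt i.2]; omega), boundary_single]
        rw [h1, ← boundary_single, boundary_boundary, map_zero]
      rw [simplexSubdivision_eq b hne, boundary_cone, h0, map_zero, sub_zero]
  have : boundary R ∘ₗ subdivision R b = subdivision R b ∘ₗ boundary R := by
    refine hom_ext_single fun l => ?_
    simpa [boundary_single, subdivision_single] using key _ l rfl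
  exact LinearMap.congr_fun this c

/-! ### Supports -/

lemma supported_lift {P : Set (List X)} {Q : Set (List Y)} (φ : (List X →₀ R) →ₗ[R] (List Y →₀ R))
    (h : ∀ l ∈ P, φ (single l 1) ∈ supported R R Q) {c : List X →₀ R}
    (hc : c ∈ supported R R P) : φ c ∈ supported R R Q := by
  rw [supported_eq_span_single] at hc
  have : Submodule.span R ((fun i => single i (1 : R)) '' P) ≤ (supported R R Q).comap φ := by
    rw [Submodule.span_le]
    rintro _ ⟨l, hl, rfl⟩
    exact h l hl
  exact this hc

lemma eq_of_supported {M : Type*} [AddCommGroup M] [Module R M] {P : Set (List X)}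
    {φ ψ : (List X →₀ R) →ₗ[R] M} (h : ∀ l ∈ P, φ (single l 1) = ψ (single l 1))
    {c : List X →₀ R} (hc : c ∈ supported R R P) : φ c = ψ c := by
  rw [supported_eq_span_single] at hc
  have : Submodule.span R ((fun i => single i (1 : R)) '' P) ≤ LinearMap.eqLocus φ ψ := by
    rw [Submodule.span_le]
    rintro _ ⟨l, hl, rfl⟩
    exact h l hl
  exact this hc

lemma vertexMap_supported {P : Set (List X)} {Q : Set (List Y)} {s : X → Y}
    (h : ∀ l ∈ P, l.map s ∈ Q) {c : List X →₀ R} (hc : c ∈ supported R R P) :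
    vertexMap R s c ∈ supported R R Q := by
  refine supported_lift _ (fun l hl => ?_) hc
  rw [vertexMap_single]
  exact single_mem_supported R 1 (h l hl)

lemma cone_supported {P Q : Set (List X)} {x : X}
    (h : ∀ l ∈ P, x :: l ∈ Q) {c : List X →₀ R} (hc : c ∈ supported R R P) :
    cone R x c ∈ supported R R Q := by
  refine supported_lift _ (fun l hl => ?_) hc
  rw [cone_single]
  exact single_mem_supported R 1 (h l hl)

lemma exists_of_mem_support_cone {x : X} {c : List X →₀ R} {l : List X}
    (h : l ∈ (cone R x c).support) : ∃ l' ∈ c.support, l = x :: l' := by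
  classical
  have := Finsupp.mapDomain_support h
  obtain ⟨l', h1, h2⟩ := Finset.mem_image.1 this
  exact ⟨l', h1, h2.symm⟩

lemma exists_of_mem_support_simplexSubdivision {b : List X → Y} {l : List X} {l' : List Y}
    (hl : l ≠ []) (h : l' ∈ (simplexSubdivision R b l).support) :
    ∃ i : Fin l.length, ∃ l'' ∈ (simplexSubdivision R b (l.eraseIdx i)).support,
      l' = b l :: l'' := by
  classical
  rw [simplexSubdivision, if_neg hl] at h
  obtain ⟨l'', h1, h2⟩ := exists_of_mem_support_cone h
  obtain ⟨i, -, hi⟩ := Finset.mem_biUnion.1 (Finsupp.support_finsetSum h1)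
  exact ⟨i, l'', Finsupp.support_smul hi, h2⟩

lemma eq_nil_of_mem_support {b : List X → Y} {l' : List Y}
    (h : l' ∈ (simplexSubdivision R b []).support) : l' = [] := by
  rw [simplexSubdivision, if_pos rfl] at h
  exact Finset.mem_singleton.1 (Finsupp.support_single_subset h)

lemma subdivision_supported {P : Set (List X)} {Q : Set (List Y)} {b : List X → Y}
    (h : ∀ l ∈ P, ∀ l' ∈ (simplexSubdivision R b l).support, l' ∈ Q) {c : List X →₀ R}
    (hc : c ∈ supported R R P) : subdivision R b c ∈ supported R R Q := by
  refine supported_lift _ (fun l hl => ?_) hc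
  rw [subdivision_single, mem_supported]
  exact fun l' hl' => h l hl l' hl'

lemma length_of_mem_support {b : List X → Y} : ∀ (n : ℕ) {l : List X} {l' : List Y},
    l.length = n → l' ∈ (simplexSubdivision R b l).support → l'.length = n := by
  intro n
  induction n with
  | zero =>
    intro l l' hl h
    obtain rfl := List.length_eq_zero_iff.1 hl
    simp [eq_nil_of_mem_support h]
  | succ n ih =>
    intro l l' hl h
    obtain ⟨i, l'', h1, rfl⟩ := exists_of_mem_support_simplexSubdivision
      (by rintro rfl; simp at hl) h
    have := ih (by rw [List.length_eraseIdx_of_lt i.2]; omega) h1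
    simp [this]

/-- Subdivision is natural on chains whose simplices satisfy a property inherited by faces. -/
lemma subdivision_vertexMap {X' Y' : Type*} {P : Set (List X)} {b : List X → Y}
    {b' : List X' → Y'} {s : X → X'} {t : Y → Y'}
    (hP : ∀ l ∈ P, ∀ i : ℕ, l.eraseIdx i ∈ P)
    (h : ∀ l ∈ P, l ≠ [] → b' (l.map s) = t (b l)) {c : List X →₀ R}
    (hc : c ∈ supported R R P) :
    subdivision R b' (vertexMap R s c) = vertexMap R t (subdivision R b c) := by
  have key : ∀ n : ℕ, ∀ l ∈ P, l.length = n →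
      simplexSubdivision R b' (l.map s) = vertexMap R t (simplexSubdivision R b l) := by
    intro n
    induction n with
    | zero =>
      intro l _ hl
      obtain rfl := List.length_eq_zero_iff.1 hl
      simp [← subdivision_single]
    | succ n ih =>
      intro l hlP hl
      have hne : l ≠ [] := by rintro rfl; simp at hl
      rw [simplexSubdivision_eq b hne, simplexSubdivision_eq b' (by simpa using hne), h l hlP hne,
        ← cone_vertexMap, ← boundary_single, ← vertexMap_single, boundary_vertexMap,
        boundary_single]
      congr 1
      simp only [simplexBoundary, map_sum, map_smul, vertexMap_single, subdivision_single]
      refine Finset.sum_congr rfl fun i _ => ?_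
      rw [ih _ (hP l hlP i) (by rw [List.length_eraseIdx_of_lt i.2]; omega)]
  refine eq_of_supported (φ := subdivision R b' ∘ₗ vertexMap R s)
    (ψ := vertexMap R t ∘ₗ subdivision R b) (fun l hl => ?_) hc
  simpa [subdivision_single] using key _ l hl rfl

end Chains

section Cochains

variable {q : ℕ} [Fact q.Prime]

/-- Indicator of a descent `b < a` between residues. -/
def descent (a b : ZMod q) : ZMod q := if b.val < a.val then 1 else 0

/-- The carry cocycle on `ZMod q`. -/
def carry (a b c : ZMod q) : ZMod q := descent b c - descent a c + descent a b

/-- Powers of the carry cocycle, evaluated on ordered simplices with an odd number of vertices. -/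
def evenCocycle : List (ZMod q) → ZMod q
  | [] => 0
  | [_] => 1
  | [_, _] => 0
  | a :: b :: c :: l => carry a b c * evenCocycle (c :: l)

/-- The generator in odd degree, evaluated on ordered simplices with an even number of vertices. -/
def oddCocycle : List (ZMod q) → ZMod q
  | a :: b :: l => (b - a) * evenCocycle (b :: l)
  | _ => 0

/-- A cochain with coboundary `oddCocycle`. -/
def evenPrimitive : List (ZMod q) → ZMod q
  | a :: l => a * evenCocycle (a :: l)
  | _ => 0

/-- A cochain with coboundary `evenCocycle`. -/
def oddPrimitive : List (ZMod q) → ZMod q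
  | a :: b :: l => descent a b * evenCocycle (b :: l)
  | _ => 0

/-- The linear extension of a cochain. -/
noncomputable abbrev evalCochain (u : List (ZMod q) → ZMod q) :
    (List (ZMod q) →₀ ZMod q) →ₗ[ZMod q] ZMod q :=
  linearCombination (ZMod q) u

lemma evalCochain_single (u : List (ZMod q) → ZMod q) (l : List (ZMod q)) :
    evalCochain u (single l 1) = u l := by simp

lemma descent_self (a : ZMod q) : descent a a = 0 := by simp [descent]

lemma q_mul_descent (a b : ZMod q) :
    (q : ℤ) * (if b.val < a.val then 1 else 0) = a.val - b.val + (b - a).val := by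
  have ha := ZMod.val_lt a
  have hb := ZMod.val_lt b
  split_ifs with h
  · have h1 : (a - b).val = a.val - b.val := ZMod.val_sub h.le
    have h2 : (b - a).val = q - (a - b).val := by
      have hne : a - b ≠ 0 := by
        intro h0
        rw [sub_eq_zero] at h0
        simp [h0] at h
      have : NeZero (a - b) := ⟨hne⟩
      rw [← neg_sub, ZMod.val_neg_of_ne_zero]
    omega
  · have h1 : (b - a).val = b.val - a.val := ZMod.val_sub (not_lt.1 h)
    omega

lemma carry_add (a b c t : ZMod q) : carry (a + t) (b + t) (c + t) = carry a b c := by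
  have hq : (q : ℤ) ≠ 0 := by exact_mod_cast (Fact.out : q.Prime).ne_zero
  have key : ∀ a b c : ZMod q, carry a b c =
      (((if c.val < b.val then 1 else 0) - (if c.val < a.val then 1 else 0) +
        (if b.val < a.val then 1 else 0) : ℤ) : ZMod q) := by
    intro a b c
    simp [carry, descent]
  rw [key, key]
  congr 1
  apply mul_left_cancel₀ hq
  simp only [mul_add, mul_sub, q_mul_descent, add_sub_add_right_eq_sub]
  ring

lemma sum_descent_add (a b : ZMod q) : ∑ t, descent (a + t) (b + t) = b - a := by
  have hq : (q : ℤ) ≠ 0 := by exact_mod_cast (Fact.out : q.Prime).ne_zero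
  have h1 : ∑ t : ZMod q, (if (b + t).val < (a + t).val then (1 : ℤ) else 0) = (b - a).val := by
    apply mul_left_cancel₀ hq
    rw [Finset.mul_sum]
    simp only [q_mul_descent, add_sub_add_right_eq_sub, Finset.sum_add_distrib,
      Finset.sum_sub_distrib]
    have hs (c : ZMod q) : ∑ t, ((c + t).val : ℤ) = ∑ t : ZMod q, (t.val : ℤ) :=
      Equiv.sum_comp (Equiv.addLeft c) fun t : ZMod q => (t.val : ℤ)
    rw [hs, hs]
    simp [ZMod.card]
  have h2 := congrArg (Int.cast : ℤ → ZMod q) h1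
  simpa [descent] using h2

lemma evenCocycle_map_add (t : ZMod q) : ∀ l : List (ZMod q),
    evenCocycle (l.map (· + t)) = evenCocycle l
  | [] => rfl
  | [_] => rfl
  | [_, _] => rfl
  | a :: b :: c :: l => by
    have := evenCocycle_map_add t (c :: l)
    simp only [List.map_cons] at this ⊢
    simp [evenCocycle, carry_add, this]

lemma evenPrimitive_map_add (t a : ZMod q) (l : List (ZMod q)) :
    evenPrimitive ((a :: l).map (· + t)) =
      evenPrimitive (a :: l) + t * evenCocycle (a :: l) := by
  have := evenCocycle_map_add t (a :: l)
  simp only [List.map_cons] at this ⊢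
  simp only [evenPrimitive, this]
  ring

lemma sum_oddPrimitive_map_add (l : List (ZMod q)) :
    ∑ t, oddPrimitive (l.map (· + t)) = oddCocycle l := by
  match l with
  | [] => simp [oddPrimitive, oddCocycle]
  | [_] => simp [oddPrimitive, oddCocycle]
  | a :: b :: l =>
    have h : ∀ t : ZMod q, oddPrimitive ((a :: b :: l).map (· + t)) =
        descent (a + t) (b + t) * evenCocycle (b :: l) := by
      intro t
      have := evenCocycle_map_add t (b :: l)
      simp only [List.map_cons] at this ⊢
      simp only [oddPrimitive, this]
    simp only [h, ← Finset.sum_mul, sum_descent_add, oddCocycle]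

/-- `evenCocycle` is a cocycle. -/
lemma evenCocycle_boundary : ∀ l : List (ZMod q), Even l.length →
    evalCochain evenCocycle (boundary (ZMod q) (single l 1)) = 0
  | [] => by simp
  | [a] => by simp
  | [a, b] => by
    intro _
    simp [boundary_single, simplexBoundary, evenCocycle]
  | [a, b, c] => fun h => by simp [Nat.even_add_one] at h
  | a :: b :: c :: d :: l => by
    intro h
    have ih := evenCocycle_boundary (c :: d :: l)
      (by simpa [Nat.even_add_one] using h)
    simp only [boundary_single, simplexBoundary_cons, map_sub, cone_single,
      evalCochain_single] at ih ⊢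
    have h3 : ∀ e : List (ZMod q) →₀ ZMod q,
        evalCochain evenCocycle (cone (ZMod q) a (cone (ZMod q) b (cone (ZMod q) c e))) =
          carry a b c * evalCochain evenCocycle (cone (ZMod q) c e) := by
      intro e
      have : evalCochain evenCocycle ∘ₗ cone (ZMod q) a ∘ₗ cone (ZMod q) b ∘ₗ cone (ZMod q) c =
          carry a b c • (evalCochain evenCocycle ∘ₗ cone (ZMod q) c) :=
        hom_ext_single fun l => by simp [evenCocycle]
      simpa using LinearMap.congr_fun this e
    rw [h3]
    have hc : carry b c d - carry a c d + carry a b d - carry a b c = 0 := by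
      simp only [carry]
      ring
    simp only [evenCocycle]
    linear_combination evenCocycle (d :: l) * hc + carry a b c * ih

lemma evalCochain_cone_boundary {a b : ZMod q} {l : List (ZMod q)} (h : Even l.length) :
    evalCochain evenCocycle (cone (ZMod q) a (simplexBoundary (ZMod q) (b :: l))) =
      evenCocycle (b :: l) := by
  have := evenCocycle_boundary (a :: b :: l) (by simpa [Nat.even_add_one] using h)
  rw [boundary_single, simplexBoundary_cons, map_sub, evalCochain_single] at this
  linear_combination -this

lemma evenPrimitive_boundary (l : List (ZMod q)) (hl : Even l.length) (hl' : l ≠ []) :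
    evalCochain evenPrimitive (boundary (ZMod q) (single l 1)) = oddCocycle l := by
  match l with
  | [_] => simp at hl
  | a :: b :: l =>
    have hl2 : Even l.length := by simpa [Nat.even_add_one] using hl
    have h : ∀ e : List (ZMod q) →₀ ZMod q, evalCochain evenPrimitive (cone (ZMod q) a e) =
        a * evalCochain evenCocycle (cone (ZMod q) a e) := by
      intro e
      have : evalCochain evenPrimitive ∘ₗ cone (ZMod q) a =
          a • (evalCochain evenCocycle ∘ₗ cone (ZMod q) a) :=
        hom_ext_single fun l => by simp [evenPrimitive]
      simpa using LinearMap.congr_fun this e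
    rw [boundary_single, simplexBoundary_cons, map_sub, h, evalCochain_cone_boundary hl2,
      evalCochain_single]
    simp only [evenPrimitive, oddCocycle]
    ring

lemma oddPrimitive_boundary (l : List (ZMod q)) (hl : Odd l.length) (hl' : 2 ≤ l.length) :
    evalCochain oddPrimitive (boundary (ZMod q) (single l 1)) = evenCocycle l := by
  match l with
  | [_] => simp at hl'
  | [_, _] => simp [Nat.odd_add_one] at hl
  | a :: b :: c :: l =>
    have hl2 : Even l.length := by simpa [Nat.odd_add_one] using hl
    have h : ∀ e : List (ZMod q) →₀ ZMod q,
        evalCochain oddPrimitive (cone (ZMod q) a (cone (ZMod q) b e)) =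
        descent a b * evalCochain evenCocycle (cone (ZMod q) b e) := by
      intro e
      have : evalCochain oddPrimitive ∘ₗ cone (ZMod q) a ∘ₗ cone (ZMod q) b =
          descent a b • (evalCochain evenCocycle ∘ₗ cone (ZMod q) b) :=
        hom_ext_single fun l => by simp [oddPrimitive]
      simpa using LinearMap.congr_fun this e
    rw [boundary_single, simplexBoundary_cons, simplexBoundary_cons]
    simp only [map_sub]
    rw [h, evalCochain_cone_boundary hl2]
    simp only [cone_single, evalCochain_single, oddPrimitive, evenCocycle, carry]
    ring

lemma isChain_of_evenCocycle_ne_zero : ∀ l : List (ZMod q), evenCocycle l ≠ 0 →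
    l.IsChain (· ≠ ·)
  | [] => by simp
  | [_] => by simp
  | [_, _] => fun h => absurd rfl h
  | a :: b :: c :: l => by
    intro h
    have ih := isChain_of_evenCocycle_ne_zero (c :: l) (right_ne_zero_of_mul h)
    have h1 := left_ne_zero_of_mul h
    refine List.IsChain.cons_cons ?_ (List.IsChain.cons_cons ?_ ih)
    · rintro rfl
      simp [carry, descent_self] at h1
    · rintro rfl
      simp [carry, descent_self] at h1

lemma isChain_of_oddCocycle_ne_zero (l : List (ZMod q)) (h : oddCocycle l ≠ 0) :
    l.IsChain (· ≠ ·) := by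
  match l with
  | [] => simp
  | [_] => simp
  | a :: b :: l =>
    refine List.IsChain.cons_cons ?_
      (isChain_of_evenCocycle_ne_zero (b :: l) (right_ne_zero_of_mul h))
    rintro rfl
    simp [oddCocycle] at h

/-- Translation of all vertices of a chain on `ZMod q`. -/
noncomputable abbrev translate (t : ZMod q) :
    (List (ZMod q) →₀ ZMod q) →ₗ[ZMod q] (List (ZMod q) →₀ ZMod q) :=
  vertexMap (ZMod q) (· + t)

/-- A sequence of chains on `ZMod q` that looks like the start of the standard resolution
contains, in each degree, an ordered simplex without repeated consecutive vertices. -/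
theorem exists_isChain_of_resolution {N : ℕ} (y : ℕ → List (ZMod q) →₀ ZMod q)
    (hlen : ∀ n ≤ N, y n ∈ supported (ZMod q) (ZMod q) {l | l.length = n + 1})
    (h0 : boundary (ZMod q) (y 0) = single [] 1)
    (hodd : ∀ m, 2 * m + 1 ≤ N →
      boundary (ZMod q) (y (2 * m + 1)) = translate 1 (y (2 * m)) - y (2 * m))
    (heven : ∀ m, 2 * m + 2 ≤ N →
      boundary (ZMod q) (y (2 * m + 2)) = ∑ t, translate t (y (2 * m + 1))) :
    ∃ l ∈ (y N).support, l.IsChain (· ≠ ·) := by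
  have hstep1 : ∀ m, 2 * m + 1 ≤ N → evalCochain evenCocycle (y (2 * m)) = 1 →
      evalCochain oddCocycle (y (2 * m + 1)) = 1 := by
    intro m hm h
    have e1 : evalCochain oddCocycle (y (2 * m + 1)) =
        (evalCochain evenPrimitive ∘ₗ boundary (ZMod q)) (y (2 * m + 1)) := by
      refine eq_of_supported (fun l hl => ?_) (hlen _ hm)
      rw [LinearMap.comp_apply, evenPrimitive_boundary l, evalCochain_single]
      · rw [show l.length = _ from hl]; exact ⟨m + 1, by ring⟩
      · rintro rfl; simp at hl
    have e2 : (evalCochain evenPrimitive ∘ₗ (translate 1 - LinearMap.id)) (y (2 * m)) =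
        evalCochain evenCocycle (y (2 * m)) := by
      refine eq_of_supported (fun l hl => ?_) (hlen _ (by omega))
      match l with
      | [] => simp at hl
      | a :: l =>
        rw [LinearMap.comp_apply, LinearMap.sub_apply, map_sub, vertexMap_single,
          LinearMap.id_apply]
        simp only [evalCochain_single, evenPrimitive_map_add]
        ring
    rw [e1, LinearMap.comp_apply, hodd m hm]
    exact e2.trans h
  have hstep2 : ∀ m, 2 * m + 2 ≤ N → evalCochain oddCocycle (y (2 * m + 1)) = 1 →
      evalCochain evenCocycle (y (2 * m + 2)) = 1 := by
    intro m hm h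
    have e1 : evalCochain evenCocycle (y (2 * m + 2)) =
        (evalCochain oddPrimitive ∘ₗ boundary (ZMod q)) (y (2 * m + 2)) := by
      refine eq_of_supported (fun l hl => ?_) (hlen _ hm)
      rw [LinearMap.comp_apply, oddPrimitive_boundary l, evalCochain_single]
      · rw [show l.length = _ from hl]; exact ⟨m + 1, by ring⟩
      · rw [show l.length = _ from hl]; omega
    have e2 : (evalCochain oddPrimitive ∘ₗ (∑ t, translate t)) (y (2 * m + 1)) =
        evalCochain oddCocycle (y (2 * m + 1)) := by
      refine eq_of_supported (fun l hl => ?_) (hlen _ (by omega))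
      rw [LinearMap.comp_apply, LinearMap.sum_apply, map_sum]
      simp only [vertexMap_single, evalCochain_single, sum_oddPrimitive_map_add]
    rw [e1, LinearMap.comp_apply, heven m hm, ← e2.trans h, LinearMap.comp_apply,
      LinearMap.sum_apply]
  have hzero : evalCochain evenCocycle (y 0) = 1 := by
    have e1 : evalCochain evenCocycle (y 0) =
        (lapply (R := ZMod q) (M := ZMod q) ([] : List (ZMod q)) ∘ₗ boundary (ZMod q)) (y 0) := by
      refine eq_of_supported (fun l hl => ?_) (hlen 0 (by omega))
      obtain ⟨a, rfl⟩ := List.length_eq_one_iff.1 (show l.length = 1 from hl)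
      simp [boundary_single, simplexBoundary, evenCocycle]
    rw [e1, LinearMap.comp_apply, h0]
    simp
  have hev : ∀ m, 2 * m ≤ N → evalCochain evenCocycle (y (2 * m)) = 1 := by
    intro m
    induction m with
    | zero => exact fun _ => hzero
    | succ m ih =>
      exact fun hm => hstep2 m (by omega) (hstep1 m (by omega) (ih (by omega)))
  have hfind : ∀ u : List (ZMod q) → ZMod q, evalCochain u (y N) = 1 →
      ∃ l ∈ (y N).support, u l ≠ 0 := by
    intro u hu
    by_contra! hcon
    rw [linearCombination_apply, Finsupp.sum,
      Finset.sum_eq_zero fun l hl => by rw [hcon l hl, smul_zero]] at hu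
    exact zero_ne_one hu
  rcases Nat.even_or_odd' N with ⟨m, hm | hm⟩
  · obtain ⟨l, hl, h⟩ := hfind _ (hm ▸ hev m (by omega))
    exact ⟨l, hl, isChain_of_evenCocycle_ne_zero l h⟩
  · obtain ⟨l, hl, h⟩ := hfind _ (hm ▸ hstep1 m (by omega) (hev m (by omega)))
    exact ⟨l, hl, isChain_of_oddCocycle_ne_zero l h⟩

end Cochains

section Resolution

variable {q : ℕ} [Fact q.Prime]

/-- Translation of the colour of all vertices. -/
noncomputable abbrev recolour (t : ZMod q) :
    (List (ℕ × ZMod q) →₀ ZMod q) →ₗ[ZMod q] (List (ℕ × ZMod q) →₀ ZMod q) :=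
  vertexMap (ZMod q) fun v => (v.1, v.2 + t)

/-- The join of a chain with a path from `(2 * m, 0)` to `(2 * m, 1)` that runs in the cycle
with colour differences `α m` and `β m`. -/
noncomputable def pathJoin (α β : ℕ → ZMod q) (m : ℕ) (c : List (ℕ × ZMod q) →₀ ZMod q) :
    List (ℕ × ZMod q) →₀ ZMod q :=
  ∑ i ∈ Finset.range (β m - α m)⁻¹.val,
    (cone (ZMod q) (2 * m, i * (β m - α m))
        (cone (ZMod q) (2 * m + 1, i * (β m - α m) + β m) c) +
      cone (ZMod q) (2 * m + 1, i * (β m - α m) + β m)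
        (cone (ZMod q) (2 * m, (i + 1 : ℕ) * (β m - α m)) c))

/-- The fundamental cycle (up to a unit) of the join of the first `m` cycles. -/
noncomputable def joinCycle (α β : ℕ → ZMod q) : ℕ → List (ℕ × ZMod q) →₀ ZMod q
  | 0 => single [] 1
  | m + 1 => ∑ t, recolour t (pathJoin α β m (joinCycle α β m))

/-- The generators of a partial resolution inside the join of the cycles. -/
noncomputable def generator (α β : ℕ → ZMod q) (n : ℕ) : List (ℕ × ZMod q) →₀ ZMod q :=
  if Even n then cone (ZMod q) (n, 0) (joinCycle α β (n / 2))
  else pathJoin α β (n / 2) (joinCycle α β (n / 2))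

lemma generator_even (α β : ℕ → ZMod q) (m : ℕ) :
    generator α β (2 * m) = cone (ZMod q) (2 * m, 0) (joinCycle α β m) := by
  simp [generator]

lemma generator_odd (α β : ℕ → ZMod q) (m : ℕ) :
    generator α β (2 * m + 1) = pathJoin α β m (joinCycle α β m) := by
  have : (2 * m + 1) / 2 = m := by omega
  simp [generator, this]

lemma recolour_recolour (s t : ZMod q) (c : List (ℕ × ZMod q) →₀ ZMod q) :
    recolour s (recolour t c) = recolour (t + s) c := by
  rw [vertexMap_vertexMap]
  congr 1
  simp [Function.comp_def, add_assoc]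

lemma recolour_joinCycle (α β : ℕ → ZMod q) (s : ZMod q) (m : ℕ) :
    recolour s (joinCycle α β m) = joinCycle α β m := by
  cases m with
  | zero => simp [joinCycle]
  | succ m =>
    simp only [joinCycle, map_sum, recolour_recolour]
    exact Equiv.sum_comp (Equiv.addRight s)
      fun t => recolour t (pathJoin α β m (joinCycle α β m))

lemma boundary_pathJoin {α β : ℕ → ZMod q} {m : ℕ} (h : α m ≠ β m)
    {c : List (ℕ × ZMod q) →₀ ZMod q} (hc : boundary (ZMod q) c = 0) :
    boundary (ZMod q) (pathJoin α β m c) =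
      cone (ZMod q) (2 * m, 1) c - cone (ZMod q) (2 * m, 0) c := by
  have hne : β m - α m ≠ 0 := sub_ne_zero.2 h.symm
  have h1 : ∀ i : ℕ, boundary (ZMod q) (cone (ZMod q) (2 * m, i * (β m - α m))
        (cone (ZMod q) (2 * m + 1, i * (β m - α m) + β m) c) +
      cone (ZMod q) (2 * m + 1, i * (β m - α m) + β m)
        (cone (ZMod q) (2 * m, (i + 1 : ℕ) * (β m - α m)) c)) =
      cone (ZMod q) (2 * m, (i + 1 : ℕ) * (β m - α m)) c -
        cone (ZMod q) (2 * m, (i : ℕ) * (β m - α m)) c := by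
    intro i
    simp only [map_add, boundary_cone, hc, map_zero, sub_zero]
    abel
  rw [pathJoin, map_sum, Finset.sum_congr rfl fun i _ => h1 i,
    Finset.sum_range_sub fun i : ℕ => cone (ZMod q) (2 * m, (i : ZMod q) * (β m - α m)) c]
  simp [inv_mul_cancel₀ hne]

lemma boundary_joinCycle {α β : ℕ → ZMod q} (h : ∀ m, α m ≠ β m) (m : ℕ) :
    boundary (ZMod q) (joinCycle α β m) = 0 := by
  induction m with
  | zero => simp [joinCycle]
  | succ m ih =>
    simp only [joinCycle, map_sum, boundary_vertexMap, boundary_pathJoin (h m) ih, map_sub,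
      ← cone_vertexMap, recolour_joinCycle, Finset.sum_sub_distrib]
    rw [sub_eq_zero, ← Equiv.sum_comp (Equiv.addLeft (1 : ZMod q))
      fun t : ZMod q => cone (ZMod q) (2 * m, 0 + t) (joinCycle α β m)]
    simp

lemma boundary_generator_zero (α β : ℕ → ZMod q) :
    boundary (ZMod q) (generator α β 0) = single [] 1 := by
  have := generator_even α β 0
  rw [mul_zero] at this
  simp [this, joinCycle, boundary_single, simplexBoundary]

lemma boundary_generator_odd {α β : ℕ → ZMod q} (h : ∀ m, α m ≠ β m) (m : ℕ) :
    boundary (ZMod q) (generator α β (2 * m + 1)) =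
      recolour 1 (generator α β (2 * m)) - generator α β (2 * m) := by
  rw [generator_odd, generator_even, boundary_pathJoin (h m) (boundary_joinCycle h m),
    ← cone_vertexMap, recolour_joinCycle, zero_add]

lemma boundary_generator_even {α β : ℕ → ZMod q} (h : ∀ m, α m ≠ β m) (m : ℕ) :
    boundary (ZMod q) (generator α β (2 * m + 2)) =
      ∑ t, recolour t (generator α β (2 * m + 1)) := by
  rw [show 2 * m + 2 = 2 * (m + 1) by ring, generator_even, generator_odd, boundary_cone,
    boundary_joinCycle h, map_zero, sub_zero, joinCycle]

/-- The colour differences along consecutive pairs are those allowed by `α` and `β`. -/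
def Compatible (α β c : ℕ → ZMod q) : Prop :=
  ∀ m, c (2 * m + 1) - c (2 * m) = α m ∨ c (2 * m + 1) - c (2 * m) = β m

/-- Ordered simplices of length `n` on the vertices with index below `k` that lie in the join
of the cycles. -/
def joinSimplices (α β : ℕ → ZMod q) (n k : ℕ) : Set (List (ℕ × ZMod q)) :=
  {l | l.length = n ∧ ∃ c, Compatible α β c ∧ ∀ v ∈ l, v.1 < k ∧ c v.1 = v.2}

lemma Compatible.add_const {α β c : ℕ → ZMod q} (h : Compatible α β c) (t : ZMod q) :
    Compatible α β fun i => c i + t := by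
  intro m
  simpa using h m

lemma Compatible.exists_update {α β c : ℕ → ZMod q} (h : Compatible α β c) (m : ℕ)
    {x y : ZMod q} (hxy : y - x = α m ∨ y - x = β m) :
    ∃ c', Compatible α β c' ∧ c' (2 * m) = x ∧ c' (2 * m + 1) = y ∧
      ∀ i < 2 * m, c' i = c i := by
  refine ⟨fun i => if i = 2 * m then x else if i = 2 * m + 1 then y else c i, ?_, ?_, ?_, ?_⟩
  · intro k
    by_cases hk : k = m
    · subst hk
      simpa using hxy
    · have h1 : 2 * k + 1 ≠ 2 * m := by omega
      have h2 : 2 * k ≠ 2 * m + 1 := by omega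
      simpa [hk, h1, h2] using h k
  · simp
  · simp
  · intro i hi
    have h1 : i ≠ 2 * m := by omega
    have h2 : i ≠ 2 * m + 1 := by omega
    simp [h1, h2]

lemma recolour_mem_joinSimplices {α β : ℕ → ZMod q} {n k : ℕ} (t : ZMod q)
    {l : List (ℕ × ZMod q)} (hl : l ∈ joinSimplices α β n k) :
    l.map (fun v => (v.1, v.2 + t)) ∈ joinSimplices α β n k := by
  obtain ⟨h1, c, hc, h2⟩ := hl
  refine ⟨by simpa using h1, _, hc.add_const t, ?_⟩
  intro v hv
  obtain ⟨w, hw, rfl⟩ := List.mem_map.1 hv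
  exact ⟨(h2 w hw).1, by simp [(h2 w hw).2]⟩

lemma edge_mem_joinSimplices {α β : ℕ → ZMod q} {m : ℕ} {x y : ZMod q}
    (hxy : y - x = α m ∨ y - x = β m) {l : List (ℕ × ZMod q)}
    (hl : l ∈ joinSimplices α β (2 * m) (2 * m)) :
    (2 * m, x) :: (2 * m + 1, y) :: l ∈ joinSimplices α β (2 * m + 2) (2 * m + 2) ∧
      (2 * m + 1, y) :: (2 * m, x) :: l ∈ joinSimplices α β (2 * m + 2) (2 * m + 2) := by
  obtain ⟨h1, c, hc, h2⟩ := hl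
  obtain ⟨c', hc', hx, hy, hlt⟩ := hc.exists_update m hxy
  have h3 : ∀ v ∈ l, v.1 < 2 * m + 2 ∧ c' v.1 = v.2 := fun v hv =>
    ⟨by have := (h2 v hv).1; omega, by rw [hlt _ (h2 v hv).1, (h2 v hv).2]⟩
  constructor
  · refine ⟨by simp [h1], c', hc', ?_⟩
    simpa [hx, hy] using fun a b hab => h3 (a, b) hab
  · refine ⟨by simp [h1], c', hc', ?_⟩
    simpa [hx, hy] using fun a b hab => h3 (a, b) hab

lemma pathJoin_supported {α β : ℕ → ZMod q} {m : ℕ} {c : List (ℕ × ZMod q) →₀ ZMod q}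
    (hc : c ∈ supported (ZMod q) (ZMod q) (joinSimplices α β (2 * m) (2 * m))) :
    pathJoin α β m c ∈
      supported (ZMod q) (ZMod q) (joinSimplices α β (2 * m + 2) (2 * m + 2)) := by
  refine Submodule.sum_mem _ fun i _ => Submodule.add_mem _ ?_ ?_
  · refine supported_lift (cone (ZMod q) _ ∘ₗ cone (ZMod q) _) (fun l hl => ?_) hc
    rw [LinearMap.comp_apply, cone_single, cone_single]
    exact single_mem_supported _ _ (edge_mem_joinSimplices (Or.inr (by ring)) hl).1
  · refine supported_lift (cone (ZMod q) _ ∘ₗ cone (ZMod q) _) (fun l hl => ?_) hc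
    rw [LinearMap.comp_apply, cone_single, cone_single]
    exact single_mem_supported _ _
      (edge_mem_joinSimplices (Or.inl (by push_cast; ring)) hl).2

lemma joinCycle_supported (α β : ℕ → ZMod q) (m : ℕ) :
    joinCycle α β m ∈ supported (ZMod q) (ZMod q) (joinSimplices α β (2 * m) (2 * m)) := by
  induction m with
  | zero =>
    refine single_mem_supported _ _ ⟨rfl, fun i => if i % 2 = 1 then α (i / 2) else 0, ?_, by simp⟩
    intro m
    have : (2 * m + 1) / 2 = m := by omega
    simp [Nat.add_mod, this]
  | succ m ih =>
    exact Submodule.sum_mem _ fun t _ =>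
      vertexMap_supported (fun l hl => recolour_mem_joinSimplices t hl) (pathJoin_supported ih)

lemma generator_supported (α β : ℕ → ZMod q) (n : ℕ) :
    generator α β n ∈ supported (ZMod q) (ZMod q) (joinSimplices α β (n + 1) (n + 1)) := by
  rcases Nat.even_or_odd' n with ⟨m, rfl | rfl⟩
  · rw [generator_even]
    refine cone_supported (fun l hl => ?_) (joinCycle_supported α β m)
    obtain ⟨h1, c, hc, h2⟩ := hl
    obtain ⟨c', hc', hx, -, hlt⟩ := hc.exists_update m (x := 0) (y := α m) (by simp)
    refine ⟨by simp [h1], c', hc', ?_⟩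
    have h3 : ∀ v ∈ l, v.1 < 2 * m + 1 ∧ c' v.1 = v.2 := fun v hv =>
      ⟨by have := (h2 v hv).1; omega, by rw [hlt _ (h2 v hv).1, (h2 v hv).2]⟩
    simpa [hx] using fun a b hab => h3 (a, b) hab
  · rw [generator_odd]
    exact pathJoin_supported (joinCycle_supported α β m)

end Resolution

section Barycentric

variable {R : Type*} [CommRing R] {E : Type*} [NormedAddCommGroup E] [NormedSpace ℝ E]

/-- The barycentre of a list of points. -/
noncomputable def barycentre (l : List E) : E := (l.length : ℝ)⁻¹ • l.sum

lemma barycentre_map {F : Type*} [NormedAddCommGroup F] [NormedSpace ℝ F] (s : E →ₗ[ℝ] F)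
    (l : List E) : barycentre (l.map s) = s (barycentre l) := by
  simp [barycentre, map_list_sum]

lemma barycentre_mem_convexHull {l : List E} (hl : l ≠ []) :
    barycentre l ∈ convexHull ℝ {x | x ∈ l} := by
  have hpos : (l.length : ℝ) ≠ 0 := by simpa using hl
  have : barycentre l = ∑ i : Fin l.length, (l.length : ℝ)⁻¹ • l[(i : ℕ)] := by
    rw [← Finset.smul_sum, Fin.sum_univ_getElem, barycentre]
  rw [this]
  refine (convex_convexHull ℝ _).sum_mem (fun i _ => by positivity) ?_ fun i _ =>
    subset_convexHull ℝ _ (List.getElem_mem i.2)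
  simp [hpos]

lemma dist_barycentre_le {l : List E} {D : ℝ} (h : ∀ x ∈ l, ∀ y ∈ l, dist x y ≤ D) {v : E}
    (hv : v ∈ l) : dist v (barycentre l) ≤ (1 - (l.length : ℝ)⁻¹) * D := by
  obtain ⟨i₀, hi₀, rfl⟩ := List.mem_iff_getElem.1 hv
  have hpos : (0 : ℝ) < l.length := by exact_mod_cast (Nat.zero_le _).trans_lt hi₀
  have h1 : barycentre l - l[i₀] = (l.length : ℝ)⁻¹ • ∑ i : Fin l.length, (l[(i : ℕ)] - l[i₀]) := by
    rw [Finset.sum_sub_distrib, Fin.sum_univ_getElem, smul_sub, barycentre]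
    simp only [Finset.sum_const, Finset.card_univ, Fintype.card_fin]
    rw [← Nat.cast_smul_eq_nsmul ℝ, smul_smul, inv_mul_cancel₀ hpos.ne', one_smul]
  have h2 : ∑ i : Fin l.length, ‖l[(i : ℕ)] - l[i₀]‖ ≤ ((l.length : ℝ) - 1) * D := by
    rw [← Finset.add_sum_erase _ _ (Finset.mem_univ (⟨i₀, hi₀⟩ : Fin l.length))]
    have h3 : ∑ i ∈ Finset.univ.erase (⟨i₀, hi₀⟩ : Fin l.length), ‖l[(i : ℕ)] - l[i₀]‖ ≤
        ∑ _i ∈ Finset.univ.erase (⟨i₀, hi₀⟩ : Fin l.length), D := by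
      refine Finset.sum_le_sum fun i _ => ?_
      rw [← dist_eq_norm]
      exact h _ (List.getElem_mem i.2) _ (List.getElem_mem hi₀)
    rw [Finset.sum_const, Finset.card_erase_of_mem (Finset.mem_univ _), nsmul_eq_mul,
      Finset.card_univ, Fintype.card_fin, Nat.cast_sub (by omega)] at h3
    simpa using h3
  rw [dist_comm, dist_eq_norm, h1, norm_smul, norm_inv, Real.norm_natCast]
  calc (l.length : ℝ)⁻¹ * ‖∑ i : Fin l.length, (l[(i : ℕ)] - l[i₀])‖
      ≤ (l.length : ℝ)⁻¹ * (((l.length : ℝ) - 1) * D) := by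
        gcongr
        exact (norm_sum_le _ _).trans h2
    _ = (1 - (l.length : ℝ)⁻¹) * D := by field_simp

lemma mem_convexHull_of_mem_support : ∀ (n : ℕ) {l l' : List E}, l.length = n →
    l' ∈ (simplexSubdivision R barycentre l).support →
    ∀ x ∈ l', x ∈ convexHull ℝ {x | x ∈ l} := by
  intro n
  induction n with
  | zero =>
    intro l l' hl h
    obtain rfl := List.length_eq_zero_iff.1 hl
    simp [eq_nil_of_mem_support h]
  | succ n ih =>
    intro l l' hl h
    have hne : l ≠ [] := by rintro rfl; simp at hl
    obtain ⟨i, l'', h1, rfl⟩ := exists_of_mem_support_simplexSubdivision hne h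
    intro x hx
    rcases List.mem_cons.1 hx with rfl | hx
    · exact barycentre_mem_convexHull hne
    · refine convexHull_mono ?_ (ih (by rw [List.length_eraseIdx_of_lt i.2]; omega) h1 x hx)
      exact fun y hy => List.mem_of_mem_eraseIdx hy

lemma dist_le_of_mem_support : ∀ (n : ℕ) {l l' : List E} {D : ℝ}, l.length = n →
    (∀ x ∈ l, ∀ y ∈ l, dist x y ≤ D) →
    l' ∈ (simplexSubdivision R barycentre l).support →
    ∀ x ∈ l', ∀ y ∈ l', dist x y ≤ (1 - (n : ℝ)⁻¹) * D := by
  intro n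
  induction n with
  | zero =>
    intro l l' D hl _ h
    obtain rfl := List.length_eq_zero_iff.1 hl
    simp [eq_nil_of_mem_support h]
  | succ n ih =>
    intro l l' D hl hD h
    have hne : l ≠ [] := by rintro rfl; simp at hl
    have hD0 : 0 ≤ D := by
      obtain ⟨v, hv⟩ := List.exists_mem_of_ne_nil l hne
      simpa using hD v hv v hv
    have hle : (n + 1 : ℝ)⁻¹ ≤ 1 := inv_le_one_of_one_le₀ (by simp)
    obtain ⟨i, l'', h1, rfl⟩ := exists_of_mem_support_simplexSubdivision hne h
    have hlen : (l.eraseIdx i).length = n := by rw [List.length_eraseIdx_of_lt i.2]; omega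
    have hb : ∀ x ∈ l'', dist x (barycentre l) ≤ (1 - ((n + 1 : ℕ) : ℝ)⁻¹) * D := by
      intro x hx
      have h2 : x ∈ convexHull ℝ {x | x ∈ l} :=
        convexHull_mono (fun y hy => List.mem_of_mem_eraseIdx hy)
          (mem_convexHull_of_mem_support n hlen h1 x hx)
      have h3 : convexHull ℝ {x | x ∈ l} ⊆
          Metric.closedBall (barycentre l) ((1 - ((n + 1 : ℕ) : ℝ)⁻¹) * D) :=
        convexHull_min (fun v hv => by
          rw [Metric.mem_closedBall, ← hl]
          exact dist_barycentre_le hD hv) (convex_closedBall _ _)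
      exact h3 h2
    have hll : ∀ x ∈ l'', ∀ y ∈ l'', dist x y ≤ (1 - ((n + 1 : ℕ) : ℝ)⁻¹) * D := by
      intro x hx y hy
      have hn : 0 < n := by
        rw [← length_of_mem_support n hlen h1]
        exact List.length_pos_of_mem hx
      refine (ih hlen (fun x hx y hy => hD x (List.mem_of_mem_eraseIdx hx) y
        (List.mem_of_mem_eraseIdx hy)) h1 x hx y hy).trans ?_
      have hn' : (0 : ℝ) < n := by exact_mod_cast hn
      have : ((n + 1 : ℕ) : ℝ)⁻¹ ≤ (n : ℝ)⁻¹ := by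
        gcongr
        simp
      gcongr
    intro x hx y hy
    rcases List.mem_cons.1 hx with rfl | hx <;> rcases List.mem_cons.1 hy with rfl | hy
    · rw [dist_self]
      push_cast
      exact mul_nonneg (by linarith) hD0
    · rw [dist_comm]
      exact hb y hy
    · exact hb x hx
    · exact hll x hx y hy

/-- Ordered simplices with `n` vertices and diameter at most `D`, inside one member of `𝒦`. -/
def smallSimplices (𝒦 : Set (Set E)) (n : ℕ) (D : ℝ) : Set (List E) :=
  {l | l.length = n ∧ (∃ K ∈ 𝒦, ∀ x ∈ l, x ∈ K) ∧ ∀ x ∈ l, ∀ y ∈ l, dist x y ≤ D}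

lemma subdivision_iterate_supported {𝒦 : Set (Set E)} (h𝒦 : ∀ K ∈ 𝒦, Convex ℝ K) {n : ℕ} {D : ℝ}
    {c : List E →₀ R} (hc : c ∈ supported R R (smallSimplices 𝒦 n D)) (r : ℕ) :
    (subdivision R barycentre)^[r] c ∈
      supported R R (smallSimplices 𝒦 n ((1 - (n : ℝ)⁻¹) ^ r * D)) := by
  induction r with
  | zero => simpa using hc
  | succ r ih =>
    rw [Function.iterate_succ_apply']
    refine subdivision_supported (fun l hl l' hl' => ?_) ih
    obtain ⟨h1, ⟨K, hK, h2⟩, h3⟩ := hl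
    refine ⟨length_of_mem_support n h1 hl', ⟨K, hK, fun x hx => ?_⟩, ?_⟩
    · exact convexHull_min (fun y hy => h2 y hy) (h𝒦 K hK)
        (mem_convexHull_of_mem_support n h1 hl' x hx)
    · rw [pow_succ', mul_assoc]
      exact dist_le_of_mem_support n h1 h3 hl'

end Barycentric

section Labels

variable {q : ℕ} [Fact q.Prime] {d : ℕ}

open Classical in
/-- The colours occurring in `A` in row `k`. -/
noncomputable def row (A : Finset (Fin (d + 1) × ZMod q)) (k : Fin (d + 1)) : Finset (ZMod q) :=
  Finset.univ.filter fun j => (k, j) ∈ A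

open Classical in
/-- The average of the colours in some nonempty row of `A`. -/
noncomputable def sign (A : Finset (Fin (d + 1) × ZMod q)) : ZMod q :=
  let s := A.image Prod.fst
  let k := if h : s.Nonempty then h.choose else 0
  (∑ j ∈ row A k, j) / (row A k).card

lemma sign_translate {A A' : Finset (Fin (d + 1) × ZMod q)} {t : ZMod q}
    (h : ∀ k j, (k, j + t) ∈ A' ↔ (k, j) ∈ A) (hA : A.Nonempty)
    (hfull : ∀ k, ∃ j, (k, j) ∉ A) : sign A' = sign A + t := by
  classical
  have himg : A'.image Prod.fst = A.image Prod.fst := by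
    ext k
    simp only [Finset.mem_image, Prod.exists, exists_and_right, exists_eq_right]
    constructor
    · rintro ⟨j, hj⟩
      exact ⟨j - t, (h k _).1 (by simpa using hj)⟩
    · rintro ⟨j, hj⟩
      exact ⟨j + t, (h k j).2 hj⟩
  have hs : (A.image Prod.fst).Nonempty := hA.image _
  simp only [sign, himg, dif_pos hs]
  set k := hs.choose
  have hk : k ∈ A.image Prod.fst := hs.choose_spec
  have hrow : row A' k = (row A k).map (Equiv.addRight t).toEmbedding := by
    ext j
    simp only [row, Finset.mem_filter, Finset.mem_univ, true_and, Finset.mem_map_equiv]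
    rw [← h]
    simp
  have hcard : ((row A k).card : ZMod q) ≠ 0 := by
    rw [Ne, ZMod.natCast_eq_zero_iff]
    refine Nat.not_dvd_of_pos_of_lt ?_ ?_
    · obtain ⟨⟨k', j⟩, hj, hkj⟩ := Finset.mem_image.1 hk
      simp only at hkj
      subst hkj
      exact Finset.card_pos.2 ⟨j, by simpa [row] using hj⟩
    · obtain ⟨j, hj⟩ := hfull k
      have : row A k ⊂ Finset.univ :=
        Finset.ssubset_univ_iff.2 fun h' => hj <| by
          have := Finset.mem_univ j
          rw [← h'] at this
          simpa [row] using this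
      simpa [ZMod.card] using Finset.card_lt_card this
  rw [hrow, Finset.card_map, Finset.sum_map]
  simp only [Equiv.coe_toEmbedding, Equiv.coe_addRight, Finset.sum_add_distrib, Finset.sum_const,
    nsmul_eq_mul]
  field_simp

lemma card_le_of_forall_exists_notMem {A : Finset (Fin (d + 1) × ZMod q)}
    (hfull : ∀ k, ∃ j, (k, j) ∉ A) : A.card ≤ (d + 1) * (q - 1) := by
  classical
  choose j hj using hfull
  have h1 : (Finset.univ.image fun k => (k, j k)) ⊆ Aᶜ := by
    intro p hp
    obtain ⟨k, -, rfl⟩ := Finset.mem_image.1 hp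
    simpa using hj k
  have h2 := Finset.card_le_card h1
  rw [Finset.card_image_of_injective _ fun a b hab => (Prod.ext_iff.1 hab).1, Finset.card_compl,
    Finset.card_univ, Fintype.card_prod, Fintype.card_fin, ZMod.card] at h2
  have h3 := Finset.card_le_univ A
  rw [Fintype.card_prod, Fintype.card_fin, ZMod.card] at h3
  rw [Nat.mul_sub, mul_one]
  omega

open Classical in
/-- All labels occurring at the vertices of a simplex. -/
noncomputable def labels {E : Type*} (A : E → Finset (Fin (d + 1) × ZMod q)) (l : List E) :
    Finset (Fin (d + 1) × ZMod q) :=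
  Finset.univ.filter fun p => ∃ v ∈ l, p ∈ A v

lemma mem_labels {E : Type*} {A : E → Finset (Fin (d + 1) × ZMod q)} {l : List E}
    {p : Fin (d + 1) × ZMod q} : p ∈ labels A l ↔ ∃ v ∈ l, p ∈ A v := by
  simp [labels]

lemma length_le_card_labels {R : Type*} [CommRing R] {E : Type*}
    {A : E → Finset (Fin (d + 1) × ZMod q)} : ∀ (n : ℕ) {l : List E} {l' : List (ZMod q)},
    l.length = n → (∀ v ∈ l, (A v).Nonempty) →
    l' ∈ (simplexSubdivision R (fun l => sign (labels A l)) l).support →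
    l'.IsChain (· ≠ ·) → n ≤ (labels A l).card := by
  intro n
  induction n with
  | zero => intros; omega
  | succ n ih =>
    intro l l' hl hA h hchain
    have hne : l ≠ [] := by rintro rfl; simp at hl
    obtain ⟨i, l'', h1, rfl⟩ := exists_of_mem_support_simplexSubdivision hne h
    have hlen : (l.eraseIdx i).length = n := by rw [List.length_eraseIdx_of_lt i.2]; omega
    have hsub : labels A (l.eraseIdx i) ⊆ labels A l := by
      intro p hp
      obtain ⟨v, hv, hp⟩ := mem_labels.1 hp
      exact mem_labels.2 ⟨v, List.mem_of_mem_eraseIdx hv, hp⟩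
    by_cases hnil : l.eraseIdx i = []
    · obtain rfl : n = 0 := by rw [← hlen, hnil]; rfl
      obtain ⟨v, hv⟩ := List.exists_mem_of_ne_nil l hne
      obtain ⟨p, hp⟩ := hA v hv
      exact Finset.card_pos.2 ⟨p, mem_labels.2 ⟨v, hv, hp⟩⟩
    · obtain ⟨i', l₃, -, rfl⟩ := exists_of_mem_support_simplexSubdivision hnil h1
      have hlt : labels A (l.eraseIdx i) ⊂ labels A l := by
        refine hsub.ssubset_of_ne fun heq => ?_
        have := (List.isChain_cons_cons.1 hchain).1
        exact this (by rw [heq])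
      have := ih hlen (fun v hv => hA v (List.mem_of_mem_eraseIdx hv)) h1
        (List.isChain_cons_cons.1 hchain).2
      exact this.trans_lt (Finset.card_lt_card hlt)

end Labels

section Existence

variable {q : ℕ} [Fact q.Prime] {N : ℕ}

/-- Translation of the colours on `ℝ ^ (Fin (N + 1) × ZMod q)`. -/
def shift (t : ZMod q) :
    (Fin (N + 1) × ZMod q → ℝ) →ₗ[ℝ] (Fin (N + 1) × ZMod q → ℝ) :=
  LinearMap.funLeft ℝ ℝ fun p => (p.1, p.2 - t)

/-- The vertex of the standard simplex with the given index and colour. -/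
def vertex (v : ℕ × ZMod q) : Fin (N + 1) × ZMod q → ℝ :=
  fun p => if (p.1 : ℕ) = v.1 ∧ p.2 = v.2 then 1 else 0

/-- The face of the standard simplex spanned by the vertices coloured according to `c`. -/
def cell (c : Fin (N + 1) → ZMod q) : Set (Fin (N + 1) × ZMod q → ℝ) :=
  {x ∈ stdSimplex ℝ (Fin (N + 1) × ZMod q) | ∀ p, p.2 ≠ c p.1 → x p = 0}

/-- The faces of the join of the cycles determined by `α` and `β`. -/
def joinCells (N : ℕ) (α β : ℕ → ZMod q) : Set (Set (Fin (N + 1) × ZMod q → ℝ)) :=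
  (fun c : ℕ → ZMod q => cell fun i => c i) '' {c | Compatible α β c}

lemma shift_vertex (t : ZMod q) (v : ℕ × ZMod q) :
    shift t (vertex (N := N) v) = vertex (v.1, v.2 + t) := by
  ext p
  simp [shift, vertex, LinearMap.funLeft_apply, sub_eq_iff_eq_add]

lemma shift_mem_cell {c : Fin (N + 1) → ZMod q} {x : Fin (N + 1) × ZMod q → ℝ} (hx : x ∈ cell c)
    (t : ZMod q) : shift t x ∈ cell fun i => c i + t := by
  refine ⟨⟨fun p => hx.1.1 _, ?_⟩, fun p hp => hx.2 _ fun h => hp ?_⟩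
  · rw [← hx.1.2]
    exact Equiv.sum_comp ((Equiv.refl (Fin (N + 1))).prodCongr (Equiv.subRight t)) x
  · have h' : p.2 - t = c p.1 := h
    exact sub_eq_iff_eq_add.1 h'

lemma convex_cell (c : Fin (N + 1) → ZMod q) : Convex ℝ (cell c) := by
  rintro x ⟨hx, hx'⟩ y ⟨hy, hy'⟩ a b ha hb hab
  refine ⟨convex_stdSimplex ℝ _ hx hy ha hb hab, fun p hp => ?_⟩
  simp [hx' p hp, hy' p hp]

lemma isCompact_cell (c : Fin (N + 1) → ZMod q) : IsCompact (cell c) := by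
  refine (isCompact_stdSimplex ℝ _).inter_right ?_
  have : {x : Fin (N + 1) × ZMod q → ℝ | ∀ p, p.2 ≠ c p.1 → x p = 0} =
      ⋂ p, ⋂ _ : p.2 ≠ c p.1, {x | x p = 0} := by
    ext x; simp
  change IsClosed {x : Fin (N + 1) × ZMod q → ℝ | ∀ p, p.2 ≠ c p.1 → x p = 0}
  rw [this]
  exact isClosed_iInter fun p => isClosed_iInter fun _ =>
    isClosed_eq (continuous_apply p) continuous_const

lemma vertex_mem_cell {c : Fin (N + 1) → ZMod q} (i : Fin (N + 1)) :
    vertex ((i : ℕ), c i) ∈ cell c := by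
  refine ⟨⟨fun p => ?_, ?_⟩, fun p hp => ?_⟩
  · simp only [vertex]
    split_ifs <;> simp
  · rw [Finset.sum_eq_single (i, c i)]
    · simp [vertex]
    · intro p _ hp
      refine if_neg fun h => hp (Prod.ext (Fin.ext h.1) h.2)
    · simp
  · refine if_neg fun h => hp ?_
    rw [h.2, show p.1 = i from Fin.ext h.1]

lemma dist_le_one_of_mem_cell {c : Fin (N + 1) → ZMod q} {x y : Fin (N + 1) × ZMod q → ℝ}
    (hx : x ∈ cell c) (hy : y ∈ cell c) : dist x y ≤ 1 := by
  refine (dist_pi_le_iff zero_le_one).2 fun p => ?_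
  have h1 := mem_Icc_of_mem_stdSimplex hx.1 p
  have h2 := mem_Icc_of_mem_stdSimplex hy.1 p
  rw [Real.dist_eq, abs_le]
  constructor <;> linarith [h1.1, h1.2, h2.1, h2.2]

lemma vertexMap_generator_supported (α β : ℕ → ZMod q) {n : ℕ} (hn : n ≤ N) :
    vertexMap (ZMod q) (vertex (N := N)) (generator α β n) ∈
      supported (ZMod q) (ZMod q) (smallSimplices (joinCells N α β) (n + 1) 1) := by
  refine vertexMap_supported (fun l hl => ?_) (generator_supported α β n)
  obtain ⟨h1, c, hc, h2⟩ := hl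
  have hmem : ∀ x ∈ l.map (vertex (N := N)), x ∈ cell fun i : Fin (N + 1) => c i := by
    intro x hx
    obtain ⟨v, hv, rfl⟩ := List.mem_map.1 hx
    have h3 : v.1 < N + 1 := (h2 v hv).1.trans_le (by omega)
    have := vertex_mem_cell (c := fun i : Fin (N + 1) => c i) ⟨v.1, h3⟩
    simpa [(h2 v hv).2] using this
  exact ⟨by simpa using h1, ⟨_, ⟨c, hc, rfl⟩, hmem⟩,
    fun x hx y hy => dist_le_one_of_mem_cell (hmem x hx) (hmem y hy)⟩

/-- The `r`-fold barycentric subdivision of `generator`, as a chain of affine simplices. -/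
noncomputable def affineGenerator (r : ℕ) :
    (List (ℕ × ZMod q) →₀ ZMod q) →ₗ[ZMod q]
      (List (Fin (N + 1) × ZMod q → ℝ) →₀ ZMod q) :=
  ((subdivision (ZMod q) barycentre) ^ r : Module.End (ZMod q) _) ∘ₗ vertexMap (ZMod q) vertex

lemma boundary_affineGenerator (r : ℕ) (c : List (ℕ × ZMod q) →₀ ZMod q) :
    boundary (ZMod q) (affineGenerator (N := N) r c) =
      affineGenerator r (boundary (ZMod q) c) := by
  simp only [affineGenerator, LinearMap.comp_apply]
  induction r with
  | zero => simp [boundary_vertexMap]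
  | succ r ih => simp only [pow_succ', Module.End.mul_apply, boundary_subdivision, ih]

lemma affineGenerator_recolour (r : ℕ) (t : ZMod q) (c : List (ℕ × ZMod q) →₀ ZMod q) :
    affineGenerator (N := N) r (recolour t c) =
      vertexMap (ZMod q) (shift t) (affineGenerator r c) := by
  simp only [affineGenerator, LinearMap.comp_apply]
  induction r with
  | zero =>
    simp only [pow_zero, Module.End.one_apply, vertexMap_vertexMap]
    congr 2
    ext1 v
    exact (shift_vertex t v).symm
  | succ r ih =>
    simp only [pow_succ', Module.End.mul_apply, ih]
    refine subdivision_vertexMap (P := Set.univ) (by simp) (fun l _ _ => barycentre_map _ l) ?_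
    simp

lemma affineGenerator_nil (r : ℕ) :
    affineGenerator (N := N) (q := q) r (single [] 1) = single [] 1 := by
  simp only [affineGenerator, LinearMap.comp_apply]
  induction r with
  | zero => simp
  | succ r ih => simp only [pow_succ', Module.End.mul_apply, ih, subdivision_nil]

/-- An equivariant labelling of the join of the cycles by `Fin (d + 1) × ZMod q` uses all the
labels of some row on some arbitrarily small simplex. -/
theorem exists_full_row {d : ℕ} (hN : N = (d + 1) * (q - 1)) {α β : ℕ → ZMod q}
    (hαβ : ∀ m, α m ≠ β m)
    (A : (Fin (N + 1) × ZMod q → ℝ) → Finset (Fin (d + 1) × ZMod q))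
    (hA : ∀ t x k j, (k, j + t) ∈ A (shift t x) ↔ (k, j) ∈ A x)
    (hne : ∀ K ∈ joinCells N α β, ∀ x ∈ K, (A x).Nonempty)
    {δ : ℝ} (hδ : 0 < δ) :
    ∃ l : List (Fin (N + 1) × ZMod q → ℝ), l ≠ [] ∧
      (∃ K ∈ joinCells N α β, ∀ x ∈ l, x ∈ K) ∧
      (∀ x ∈ l, ∀ y ∈ l, dist x y < δ) ∧ ∃ k, ∀ j, (k, j) ∈ labels A l := by
  by_contra! hcon
  set P : Set (List (Fin (N + 1) × ZMod q → ℝ)) :=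
    {l | (∃ K ∈ joinCells N α β, ∀ x ∈ l, x ∈ K) ∧ ∀ x ∈ l, ∀ y ∈ l, dist x y < δ} with hPdef
  have hfull : ∀ l ∈ P, l ≠ [] → ∀ k, ∃ j, (k, j) ∉ labels A l := fun l hl hl' =>
    hcon l hl' hl.1 hl.2
  have hN0 : (0 : ℝ) ≤ 1 - ((N + 1 : ℕ) : ℝ)⁻¹ := by
    rw [sub_nonneg]
    exact inv_le_one_of_one_le₀ (by simp)
  obtain ⟨r, hr⟩ : ∃ r : ℕ, (1 - ((N + 1 : ℕ) : ℝ)⁻¹) ^ r < δ := by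
    refine exists_pow_lt_of_lt_one hδ ?_
    rw [sub_lt_self_iff]
    positivity
  set b : List (Fin (N + 1) × ZMod q → ℝ) → ZMod q := fun l => sign (labels A l)
  set x : ℕ → List (Fin (N + 1) × ZMod q → ℝ) →₀ ZMod q :=
    fun n => affineGenerator r (generator α β n)
  have hx : ∀ n ≤ N, x n ∈ supported (ZMod q) (ZMod q) (P ∩ {l | l.length = n + 1}) := by
    intro n hn
    have h1 := subdivision_iterate_supported (𝒦 := joinCells N α β)
      (by rintro _ ⟨c, -, rfl⟩; exact convex_cell _) (vertexMap_generator_supported α β hn) r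
    have h2 : x n = (subdivision (ZMod q) barycentre)^[r]
        (vertexMap (ZMod q) (vertex (N := N)) (generator α β n)) := by
      simp only [x, affineGenerator, LinearMap.comp_apply, Module.End.pow_apply]
    rw [h2]
    refine supported_mono ?_ h1
    rintro l ⟨hl1, hl2, hl3⟩
    refine ⟨⟨hl2, fun x hx y hy => (hl3 x hx y hy).trans_lt (lt_of_le_of_lt ?_ hr)⟩, hl1⟩
    rw [mul_one]
    have : ((n + 1 : ℕ) : ℝ)⁻¹ ≤ 1 := inv_le_one_of_one_le₀ (by simp)
    have h3 : ((N + 1 : ℕ) : ℝ)⁻¹ ≤ ((n + 1 : ℕ) : ℝ)⁻¹ := by gcongr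
    exact pow_le_pow_left₀ (by linarith) (by linarith) r
  have hPerase : ∀ l ∈ P, ∀ i : ℕ, l.eraseIdx i ∈ P := by
    rintro l ⟨⟨K, hK, h1⟩, h2⟩ i
    exact ⟨⟨K, hK, fun x hx => h1 x (List.mem_of_mem_eraseIdx hx)⟩, fun x hx y hy =>
      h2 x (List.mem_of_mem_eraseIdx hx) y (List.mem_of_mem_eraseIdx hy)⟩
  have hPne : ∀ l ∈ P, l ≠ [] → (labels A l).Nonempty := by
    rintro l ⟨⟨K, hK, h1⟩, -⟩ hl
    obtain ⟨v, hv⟩ := List.exists_mem_of_ne_nil l hl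
    obtain ⟨p, hp⟩ := hne K hK v (h1 v hv)
    exact ⟨p, mem_labels.2 ⟨v, hv, hp⟩⟩
  have hequiv : ∀ n ≤ N, ∀ t, translate t (subdivision (ZMod q) b (x n)) =
      subdivision (ZMod q) b (affineGenerator r (recolour t (generator α β n))) := by
    intro n hn t
    rw [affineGenerator_recolour]
    refine (subdivision_vertexMap hPerase (fun l hl hl' => ?_)
      (supported_mono Set.inter_subset_left (hx n hn))).symm
    refine sign_translate (fun k j => ?_) (hPne l hl hl') (hfull l hl hl')
    rw [mem_labels, mem_labels]
    constructor
    · rintro ⟨_, hv, hp⟩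
      obtain ⟨w, hw, rfl⟩ := List.mem_map.1 hv
      exact ⟨w, hw, (hA t w k j).1 hp⟩
    · rintro ⟨w, hw, hp⟩
      exact ⟨_, List.mem_map_of_mem hw, (hA t w k j).2 hp⟩
  have hbd : ∀ n, boundary (ZMod q) (subdivision (ZMod q) b (x n)) =
      subdivision (ZMod q) b (affineGenerator r (boundary (ZMod q) (generator α β n))) := by
    intro n
    rw [boundary_subdivision, boundary_affineGenerator]
  obtain ⟨l', hl', hchain⟩ := exists_isChain_of_resolution (N := N)
    (fun n => subdivision (ZMod q) b (x n))
    (fun n hn => subdivision_supported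
      (fun l hl l' hl' => length_of_mem_support (n + 1) hl.2 hl') (hx n hn))
    (by rw [hbd, boundary_generator_zero, affineGenerator_nil, subdivision_nil])
    (fun m hm => by
      rw [hbd, boundary_generator_odd hαβ, map_sub, map_sub, hequiv _ (by omega)])
    (fun m hm => by
      rw [hbd, boundary_generator_even hαβ, map_sum, map_sum]
      exact Finset.sum_congr rfl fun t _ => (hequiv _ (by omega) t).symm)
  have hbad : subdivision (ZMod q) b (x N) ∈
      supported (ZMod q) (ZMod q) {l' | ¬ l'.IsChain (· ≠ ·)} := by
    refine subdivision_supported (fun l hl l' hl' hch => ?_) (hx N le_rfl)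
    obtain ⟨hlP, hlen⟩ := hl
    have hl0 : l ≠ [] := by rintro rfl; simp at hlen
    obtain ⟨⟨K, hK, h1⟩, -⟩ := id hlP
    have h2 := length_le_card_labels (N + 1) hlen (fun v hv => hne K hK v (h1 v hv)) hl' hch
    have h3 := card_le_of_forall_exists_notMem (hfull l hlP hl0)
    rw [← hN] at h3
    omega
  exact (mem_supported _ _).1 hbad hl' hchain

/-- **Zeros in joins of cycles.** A continuous equivariant map from the simplex on
`Fin (N + 1) × ZMod q` to `d + 1` copies of the regular representation takes a value in the
diagonal on some face that is compatible with `α` and `β`. -/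
theorem exists_diagonal {d : ℕ} (hN : N = (d + 1) * (q - 1)) {α β : ℕ → ZMod q}
    (hαβ : ∀ m, α m ≠ β m)
    (G : (Fin (N + 1) × ZMod q → ℝ) → Fin (d + 1) × ZMod q → ℝ)
    (hG : ∀ t x k j, G (shift t x) (k, j + t) = G x (k, j))
    (hcont : ContinuousOn G (stdSimplex ℝ (Fin (N + 1) × ZMod q))) :
    ∃ c : ℕ → ZMod q, Compatible α β c ∧
      ∃ x ∈ cell fun i : Fin (N + 1) => c i, ∀ k j j', G x (k, j) = G x (k, j') := by
  classical
  by_contra! hcon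
  set spread : (Fin (N + 1) × ZMod q → ℝ) → Fin (d + 1) × ZMod q × ZMod q → ℝ :=
    fun x p => G x (p.1, p.2.1) - G x (p.1, p.2.2)
  have hKcomp : IsCompact (⋃₀ joinCells N α β) := by
    refine Set.Finite.isCompact_sUnion ?_ ?_
    · refine (Set.finite_range (cell (N := N) (q := q))).subset ?_
      rintro _ ⟨c, -, rfl⟩
      exact ⟨_, rfl⟩
    · rintro _ ⟨c, -, rfl⟩
      exact isCompact_cell _
  have hKsub : ⋃₀ joinCells N α β ⊆ stdSimplex ℝ (Fin (N + 1) × ZMod q) := by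
    rintro x ⟨_, ⟨c, -, rfl⟩, hx⟩
    exact hx.1
  have hspread : ContinuousOn (fun x => ‖spread x‖) (⋃₀ joinCells N α β) := by
    have hc := hcont.mono hKsub
    rw [continuousOn_pi] at hc
    have hs : ContinuousOn spread (⋃₀ joinCells N α β) :=
      continuousOn_pi.2 fun p => (hc (p.1, p.2.1)).sub (hc (p.1, p.2.2))
    exact hs.norm
  obtain ⟨ε, hε, hmin⟩ : ∃ ε > 0, ∀ x ∈ ⋃₀ joinCells N α β, ε ≤ ‖spread x‖ := by
    rcases (⋃₀ joinCells N α β).eq_empty_or_nonempty with h | h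
    · exact ⟨1, one_pos, by simp [h]⟩
    · obtain ⟨x, hx, hxm⟩ := hKcomp.exists_isMinOn h hspread
      refine ⟨_, ?_, fun y hy => hxm hy⟩
      obtain ⟨_, ⟨c, hc, rfl⟩, hxc⟩ := hx
      obtain ⟨k, j, j', hne⟩ := hcon c hc x hxc
      refine norm_pos_iff.2 fun h0 => hne ?_
      exact sub_eq_zero.1 (congrFun h0 (k, j, j'))
  obtain ⟨δ, hδ, hunif⟩ := Metric.uniformContinuousOn_iff.1
    ((isCompact_stdSimplex ℝ _).uniformContinuousOn_of_continuous hcont) (ε / 2) (by positivity)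
  set A : (Fin (N + 1) × ZMod q → ℝ) → Finset (Fin (d + 1) × ZMod q) :=
    fun x => Finset.univ.filter fun p => ∃ j', G x (p.1, j') + ε ≤ G x p
  have hA : ∀ x k j, (k, j) ∈ A x ↔ ∃ j', G x (k, j') + ε ≤ G x (k, j) := by simp [A]
  obtain ⟨l, hl, ⟨K, hK, hlK⟩, hdist, k, hk⟩ := exists_full_row hN hαβ A
    (fun t x k j => by
      rw [hA, hA, hG]
      constructor
      · rintro ⟨j', hj'⟩
        refine ⟨j' - t, ?_⟩
        rw [← hG t x k (j' - t)]
        simpa using hj'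
      · rintro ⟨j', hj'⟩
        exact ⟨j' + t, by rwa [hG]⟩)
    (fun K hK x hx => by
      have h1 := hmin x ⟨K, hK, hx⟩
      have h2 : ∃ p, ε ≤ ‖spread x p‖ := by
        by_contra! h
        exact h1.not_gt ((pi_norm_lt_iff hε).2 h)
      obtain ⟨⟨k, j, j'⟩, h⟩ := h2
      rcases le_abs.1 h with h | h
      · exact ⟨(k, j), (hA x k j).2 ⟨j', by simp only [spread] at h; linarith⟩⟩
      · exact ⟨(k, j'), (hA x k j').2 ⟨j, by simp only [spread] at h; linarith⟩⟩) hδ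
  obtain ⟨v, hv⟩ := List.exists_mem_of_ne_nil l hl
  obtain ⟨j, -, hj⟩ := Finset.exists_min_image Finset.univ (fun j : ZMod q => G v (k, j))
    ⟨0, Finset.mem_univ _⟩
  obtain ⟨w, hw, hkw⟩ := mem_labels.1 (hk j)
  obtain ⟨j', hj'⟩ := (hA w k j).1 hkw
  have hclose := (dist_pi_lt_iff (by positivity)).1
    (hunif v (hKsub ⟨K, hK, hlK v hv⟩) w (hKsub ⟨K, hK, hlK w hw⟩) (hdist v hv w hw))
  have h1 := abs_lt.1 (Real.dist_eq _ _ ▸ hclose (k, j))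
  have h2 := abs_lt.1 (Real.dist_eq _ _ ▸ hclose (k, j'))
  have h3 := hj j' (Finset.mem_univ _)
  linarith [h1.1, h1.2, h2.1, h2.2]

end Existence

section Counting

variable {q : ℕ} [Fact q.Prime] {N : ℕ}

lemma card_offDiag_filter_le (a : ZMod q) :
    (((Finset.univ : Finset (ZMod q)).offDiag).filter fun p => a = p.1 ∨ a = p.2).card ≤
      2 * (q - 1) := by
  have hsub : (((Finset.univ : Finset (ZMod q)).offDiag).filter fun p => a = p.1 ∨ a = p.2) ⊆
      ((Finset.univ.erase a).image fun b => (a, b)) ∪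
        ((Finset.univ.erase a).image fun b => (b, a)) := by
    rintro ⟨b, c⟩ h
    simp only [Finset.mem_filter, Finset.mem_offDiag, Finset.mem_univ, true_and] at h
    obtain ⟨hbc, rfl | rfl⟩ := h
    · simp [hbc.symm]
    · simp [hbc]
  refine (Finset.card_le_card hsub).trans ((Finset.card_union_le _ _).trans ?_)
  have hcard : ((Finset.univ : Finset (ZMod q)).erase a).card = q - 1 := by
    simp [ZMod.card]
  have h1 := Finset.card_image_le (s := Finset.univ.erase a) (f := fun b : ZMod q => (a, b))
  have h2 := Finset.card_image_le (s := Finset.univ.erase a) (f := fun b : ZMod q => (b, a))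
  omega

/-- A translation invariant set of colourings which meets every compatibility condition is large. -/
lemma card_mul_le_of_forall_compatible (C : Finset (Fin (N + 1) → ZMod q))
    (hshift : ∀ c ∈ C, ∀ t, (fun i => c i + t) ∈ C)
    (hex : ∀ α β : ℕ → ZMod q, (∀ m, α m ≠ β m) →
      ∃ c, Compatible α β c ∧ (fun i : Fin (N + 1) => c i) ∈ C) :
    (q * (q - 1)) ^ ((N + 1) / 2) * q ≤ C.card * (2 * (q - 1)) ^ ((N + 1) / 2) := by
  classical
  set p := (N + 1) / 2
  let lo : Fin p → Fin (N + 1) := fun m => ⟨2 * m, by omega⟩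
  let hi : Fin p → Fin (N + 1) := fun m => ⟨2 * m + 1, by omega⟩
  let r : (Fin p → ZMod q × ZMod q) → (Fin (N + 1) → ZMod q) → Prop := fun γ c =>
    ∀ m, c (hi m) - c (lo m) = (γ m).1 ∨ c (hi m) - c (lo m) = (γ m).2
  let Γ : Finset (Fin p → ZMod q × ZMod q) :=
    Fintype.piFinset fun _ => (Finset.univ : Finset (ZMod q)).offDiag
  have hΓ : Γ.card = (q * (q - 1)) ^ p := by
    simp [Γ, Finset.offDiag_card, ZMod.card, Nat.mul_sub]
  rw [← hΓ]
  refine Finset.card_mul_le_card_mul r (fun γ hγ => ?_) fun c _ => ?_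
  · have hγ' : ∀ m, (γ m).1 ≠ (γ m).2 := fun m => by
      have := Fintype.mem_piFinset.1 hγ m
      simpa using this
    obtain ⟨c, hc, hcC⟩ := hex (fun m => if h : m < p then (γ ⟨m, h⟩).1 else 0)
      (fun m => if h : m < p then (γ ⟨m, h⟩).2 else 1) fun m => by
        by_cases h : m < p
        · simpa [h] using hγ' ⟨m, h⟩
        · simp [h]
    calc q = (Finset.univ.image fun (t : ZMod q) (i : Fin (N + 1)) => c i + t).card := by
            rw [Finset.card_image_of_injective, Finset.card_univ, ZMod.card]
            intro s t hst
            exact add_left_cancel (congrFun hst 0)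
      _ ≤ _ := by
            refine Finset.card_le_card fun c' hc' => ?_
            obtain ⟨t, -, rfl⟩ := Finset.mem_image.1 hc'
            refine (Finset.mem_bipartiteAbove r).2 ⟨hshift _ hcC t, fun m => ?_⟩
            have := hc m
            simpa [lo, hi] using this
  · calc _ ≤ (Fintype.piFinset fun m : Fin p =>
            ((Finset.univ : Finset (ZMod q)).offDiag).filter fun x =>
              c (hi m) - c (lo m) = x.1 ∨ c (hi m) - c (lo m) = x.2).card := by
            refine Finset.card_le_card fun γ hγ => ?_
            obtain ⟨hγ, h⟩ := (Finset.mem_bipartiteBelow r).1 hγ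
            exact Fintype.mem_piFinset.2 fun m =>
              Finset.mem_filter.2 ⟨Fintype.mem_piFinset.1 hγ m, h m⟩
      _ ≤ (2 * (q - 1)) ^ p := by
            rw [Fintype.card_piFinset]
            refine (Finset.prod_le_pow_card _ _ _ fun m _ => card_offDiag_filter_le _).trans ?_
            simp

/-- The set of colour classes of a colouring. -/
def colourClasses (c : Fin (N + 1) → ZMod q) : Finset (Finset (Fin (N + 1))) :=
  Finset.univ.image fun j => Finset.univ.filter fun i => c i = j

/-- At most `q!` colourings have the same `q` colour classes. -/
lemma card_filter_colourClasses_le (C : Finset (Fin (N + 1) → ZMod q))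
    {T : Finset (Finset (Fin (N + 1)))} (hT : T.card = q) :
    (C.filter fun c => colourClasses c = T).card ≤ q.factorial := by
  classical
  have hmem : ∀ c ∈ C.filter (fun c => colourClasses c = T), ∀ j,
      (Finset.univ.filter fun i => c i = j) ∈ T := fun c hc j => by
    rw [← (Finset.mem_filter.1 hc).2]
    exact Finset.mem_image_of_mem _ (Finset.mem_univ j)
  have hinj : ∀ c ∈ C.filter (fun c => colourClasses c = T),
      Function.Injective fun j => Finset.univ.filter fun i => c i = j := fun c hc => by
    have h : (colourClasses c).card = (Finset.univ : Finset (ZMod q)).card := by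
      rw [(Finset.mem_filter.1 hc).2, hT, Finset.card_univ, ZMod.card]
    exact Set.injOn_univ.1 (by simpa using Finset.card_image_iff.1 h)
  let F : {c // c ∈ C.filter fun c => colourClasses c = T} → (ZMod q ↪ T) := fun c =>
    ⟨fun j => ⟨_, hmem c c.2 j⟩, fun j j' h => hinj c c.2 (Subtype.ext_iff.1 h)⟩
  have hF : Function.Injective F := by
    intro c c' h
    ext1
    funext i
    have h1 := Subtype.ext_iff.1 (DFunLike.congr_fun h (c.1 i))
    have h2 : i ∈ Finset.univ.filter fun i' => c.1 i' = c.1 i := by simp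
    have h3 : i ∈ Finset.univ.filter fun i' => c'.1 i' = c.1 i := by
      rw [← show _ = (Finset.univ.filter fun i' => c'.1 i' = c.1 i) from h1]
      exact h2
    exact (Finset.mem_filter.1 h3).2.symm
  have := Fintype.card_le_of_injective F hF
  rwa [Fintype.card_coe, Fintype.card_embedding_eq, Fintype.card_coe, hT, ZMod.card,
    Nat.descFactorial_self] at this

end Counting

section Perspective

variable {N d : ℕ}

/-- The positively homogeneous extension of a map defined on the standard simplex. -/
def homogenize (f : (Fin (N + 1) → ℝ) → Euc d) (y : Fin (N + 1) → ℝ) : Euc d :=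
  (∑ i, y i) • f ((∑ i, y i)⁻¹ • y)

lemma inv_sum_smul_mem_stdSimp {y : Fin (N + 1) → ℝ} (hy : ∀ i, 0 ≤ y i) (h : ∑ i, y i ≠ 0) :
    (∑ i, y i)⁻¹ • y ∈ stdSimp N := by
  refine ⟨fun i => mul_nonneg (inv_nonneg.2 (Finset.sum_nonneg fun i _ => hy i)) (hy i), ?_⟩
  simp only [Pi.smul_apply, smul_eq_mul, ← Finset.mul_sum]
  exact inv_mul_cancel₀ h

lemma continuousOn_homogenize {f : (Fin (N + 1) → ℝ) → Euc d} (hf : ContinuousOn f (stdSimp N)) :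
    ContinuousOn (homogenize f) {y | ∀ i, 0 ≤ y i} := by
  have hsum : Continuous fun y : Fin (N + 1) → ℝ => ∑ i, y i := by fun_prop
  intro y hy
  by_cases h : ∑ i, y i = 0
  · obtain ⟨K, hK⟩ : ∃ K, ∀ x ∈ stdSimp N, ‖f x‖ ≤ K :=
      (isCompact_stdSimplex ℝ (Fin (N + 1))).exists_bound_of_continuousOn hf
    have h0 : homogenize f y = 0 := by simp [homogenize, h]
    rw [ContinuousWithinAt, h0]
    refine squeeze_zero_norm' (a := fun z => (∑ i, z i) * K) ?_ ?_
    · filter_upwards [self_mem_nhdsWithin] with z hz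
      by_cases hz0 : ∑ i, z i = 0
      · simp [homogenize, hz0]
      · have hz1 : 0 ≤ ∑ i, z i := Finset.sum_nonneg fun i _ => hz i
        rw [homogenize, norm_smul, Real.norm_of_nonneg hz1]
        exact mul_le_mul_of_nonneg_left (hK _ (inv_sum_smul_mem_stdSimp hz hz0)) hz1
    · have : Filter.Tendsto (fun z : Fin (N + 1) → ℝ => (∑ i, z i) * K)
          (nhdsWithin y {y | ∀ i, 0 ≤ y i}) (nhds ((∑ i, y i) * K)) :=
        ((hsum.mul continuous_const).tendsto y).mono_left nhdsWithin_le_nhds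
      simpa [h] using this
  · have hev : {z : Fin (N + 1) → ℝ | ∑ i, z i ≠ 0} ∈ nhdsWithin y {y | ∀ i, 0 ≤ y i} :=
      nhdsWithin_le_nhds ((isOpen_ne.preimage hsum).mem_nhds h)
    rw [← continuousWithinAt_inter' hev]
    refine hsum.continuousWithinAt.smul ?_
    refine ContinuousWithinAt.comp (t := stdSimp N) (hf _ (inv_sum_smul_mem_stdSimp hy h)) ?_
      fun z hz => inv_sum_smul_mem_stdSimp hz.1 hz.2
    exact (hsum.continuousAt.inv₀ h).continuousWithinAt.smul continuousWithinAt_id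

end Perspective

section Main

variable {q : ℕ} [Fact q.Prime] {N d : ℕ}

/-- The equivariant test map associated with `f`: the total weight and the homogenized value of
`f` on every colour. -/
def testMap (f : (Fin (N + 1) → ℝ) → Euc d) (x : Fin (N + 1) × ZMod q → ℝ)
    (p : Fin (d + 1) × ZMod q) : ℝ :=
  (Fin.cons (∑ i, x (i, p.2)) fun k => homogenize f (fun i => x (i, p.2)) k : Fin (d + 1) → ℝ) p.1

lemma testMap_shift (f : (Fin (N + 1) → ℝ) → Euc d) (t : ZMod q) (x : Fin (N + 1) × ZMod q → ℝ)
    (k : Fin (d + 1)) (j : ZMod q) : testMap f (shift t x) (k, j + t) = testMap f x (k, j) := by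
  have : ∀ i, shift t x (i, j + t) = x (i, j) := fun i => by
    simp [shift, LinearMap.funLeft_apply]
  simp [testMap, this]

lemma continuousOn_testMap {f : (Fin (N + 1) → ℝ) → Euc d} (hf : ContinuousOn f (stdSimp N)) :
    ContinuousOn (testMap (q := q) f) (stdSimplex ℝ (Fin (N + 1) × ZMod q)) := by
  refine continuousOn_pi.2 fun ⟨k, j⟩ => ?_
  refine Fin.cases ?_ (fun k => ?_) k
  · simp only [testMap, Fin.cons_zero]
    fun_prop
  · simp only [testMap, Fin.cons_succ]
    have h := (continuousOn_homogenize hf).comp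
      (f := fun (x : Fin (N + 1) × ZMod q → ℝ) i => x (i, j))
      (s := stdSimplex ℝ (Fin (N + 1) × ZMod q)) (by fun_prop) fun x hx i => hx.1 _
    exact (EuclideanSpace.proj (𝕜 := ℝ) k).continuous.comp_continuousOn h

lemma isTverbergPartition_colourClasses {f : (Fin (N + 1) → ℝ) → Euc d}
    {c : Fin (N + 1) → ZMod q} {x : Fin (N + 1) × ZMod q → ℝ} (hx : x ∈ cell c)
    (hdiag : ∀ k j j', testMap f x (k, j) = testMap f x (k, j')) :
    IsTverbergPartition q f (colourClasses c) := by
  classical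
  have hsum : ∀ j j', ∑ i, x (i, j) = ∑ i, x (i, j') := fun j j' => by
    simpa [testMap] using hdiag 0 j j'
  have hpos : ∀ j, ∑ i, x (i, j) ≠ 0 := fun j h => by
    have h1 := hx.1.2
    rw [Fintype.sum_prod_type_right] at h1
    simp [fun j' => (hsum j' j).trans h] at h1
  have hval : ∀ j j', f ((∑ i, x (i, j))⁻¹ • fun i => x (i, j)) =
      f ((∑ i, x (i, j'))⁻¹ • fun i => x (i, j')) := fun j j' => by
    have h1 : homogenize f (fun i => x (i, j)) = homogenize f (fun i => x (i, j')) := by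
      ext k
      simpa [testMap] using hdiag k.succ j j'
    simp only [homogenize, hsum j j'] at h1 ⊢
    exact smul_right_injective _ (hpos j') h1
  have hclass : ∀ j, ∃ i, c i = j := fun j => by
    by_contra! h
    exact hpos j (Finset.sum_eq_zero fun i _ => hx.2 (i, j) (h i).symm)
  refine ⟨?_, ?_, ?_, f ((∑ i, x (i, 0))⁻¹ • fun i => x (i, 0)), ?_⟩
  · rw [colourClasses, Finset.card_image_of_injective, Finset.card_univ, ZMod.card]
    intro j j' h
    obtain ⟨i, rfl⟩ := hclass j
    have : i ∈ Finset.univ.filter fun i' => c i' = j' := by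
      rw [← show _ = (Finset.univ.filter fun i' => c i' = j') from h]
      simp
    exact (Finset.mem_filter.1 this).2
  · intro S hS
    obtain ⟨j, -, rfl⟩ := Finset.mem_image.1 hS
    obtain ⟨i, hi⟩ := hclass j
    exact ⟨i, by simp [hi]⟩
  · intro S hS T hT hST
    obtain ⟨j, -, rfl⟩ := Finset.mem_image.1 hS
    obtain ⟨j', -, rfl⟩ := Finset.mem_image.1 hT
    rw [Finset.disjoint_left]
    intro i hi hi'
    simp only [Finset.mem_filter, Finset.mem_univ, true_and] at hi hi'
    exact hST (by rw [← hi, ← hi'])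
  · refine Set.mem_iInter₂.2 fun S hS => ?_
    obtain ⟨j, -, rfl⟩ := Finset.mem_image.1 hS
    refine ⟨_, ⟨inv_sum_smul_mem_stdSimp (fun i => hx.1.1 _) (hpos j), fun i hi => ?_⟩, hval j 0⟩
    have : x (i, j) = 0 := hx.2 (i, j) fun h => hi (by simp [show j = c i from h])
    simp [this]

end Main

end Tverberg

/-- **Vučić–Živaljević bound.** For prime `q`, every continuous map
`Δ^{(d+1)(q-1)} → ℝ^d` has at least `(1/(q-1)!) · (q/2)^{(d+1)(q-1)/2}`
Tverberg partitions. -/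
theorem vucic_zivaljevic (q d : ℕ) (hq : q.Prime) (hd : 1 ≤ d)
    (f : (Fin ((d+1)*(q-1)+1) → ℝ) → Euc d)
    (hf : ContinuousOn f (stdSimp ((d+1)*(q-1)))) :
    (1 / (Nat.factorial (q-1) : ℝ)) * ((q : ℝ)/2) ^ ((((d+1)*(q-1) : ℕ) : ℝ)/2) ≤
      (({P : Finset (Finset (Fin ((d+1)*(q-1)+1))) |
          IsTverbergPartition q f P}.ncard : ℕ) : ℝ) := by
  classical
  have : Fact q.Prime := ⟨hq⟩
  generalize hN : (d + 1) * (q - 1) = N at f hf ⊢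
  let C : Finset (Fin (N + 1) → ZMod q) := Finset.univ.filter fun c =>
    ∃ x ∈ Tverberg.cell c, ∀ k j j', Tverberg.testMap f x (k, j) = Tverberg.testMap f x (k, j')
  let T : Finset (Finset (Finset (Fin (N + 1)))) := Finset.univ.filter (IsTverbergPartition q f)
  have hT : {P | IsTverbergPartition q f P}.ncard = T.card := by
    rw [← Set.ncard_coe_finset]
    simp [T]
  have hC : (q * (q - 1)) ^ ((N + 1) / 2) * q ≤ C.card * (2 * (q - 1)) ^ ((N + 1) / 2) := by
    refine Tverberg.card_mul_le_of_forall_compatible C (fun c hc t => ?_) fun α β hαβ => ?_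
    · obtain ⟨x, hx, hdiag⟩ := (Finset.mem_filter.1 hc).2
      refine Finset.mem_filter.2 ⟨Finset.mem_univ _, _, Tverberg.shift_mem_cell hx t, ?_⟩
      intro k j j'
      have h := hdiag k (j - t) (j' - t)
      rw [← Tverberg.testMap_shift f t x k (j - t), ← Tverberg.testMap_shift f t x k (j' - t)] at h
      simpa using h
    · obtain ⟨c, hc, hx⟩ := Tverberg.exists_diagonal hN.symm hαβ (Tverberg.testMap f)
        (Tverberg.testMap_shift f) (Tverberg.continuousOn_testMap hf)
      exact ⟨c, hc, Finset.mem_filter.2 ⟨Finset.mem_univ _, hx⟩⟩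
  have hCT : C.card ≤ q.factorial * T.card := by
    refine Finset.card_le_mul_card_image_of_maps_to (f := Tverberg.colourClasses)
      (fun c hc => ?_) _ fun P hP => ?_
    · obtain ⟨x, hx, hdiag⟩ := (Finset.mem_filter.1 hc).2
      exact Finset.mem_filter.2
        ⟨Finset.mem_univ _, Tverberg.isTverbergPartition_colourClasses hx hdiag⟩
    · exact Tverberg.card_filter_colourClasses_le C (Finset.mem_filter.1 hP).2.1
  rw [hT]
  have hq2 := hq.two_le
  set p := (N + 1) / 2 with hp
  have hnat : q ^ p ≤ (q - 1).factorial * T.card * 2 ^ p := by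
    have h1 : 0 < (q - 1) ^ p * q := Nat.mul_pos (Nat.pow_pos (by omega)) hq.pos
    refine Nat.le_of_mul_le_mul_left ?_ h1
    calc (q - 1) ^ p * q * q ^ p = (q * (q - 1)) ^ p * q := by rw [mul_pow]; ring
      _ ≤ C.card * (2 * (q - 1)) ^ p := hC
      _ ≤ q.factorial * T.card * (2 * (q - 1)) ^ p := Nat.mul_le_mul_right _ hCT
      _ = (q - 1) ^ p * q * ((q - 1).factorial * T.card * 2 ^ p) := by
          rw [← Nat.mul_factorial_pred hq.ne_zero, mul_pow]; ring
  have hfac : (0 : ℝ) < ((q - 1).factorial : ℝ) := by exact_mod_cast Nat.factorial_pos _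
  have hreal : ((q : ℝ) / 2) ^ p ≤ (q - 1).factorial * T.card := by
    rw [div_pow, div_le_iff₀ (by positivity)]
    exact_mod_cast hnat
  have hq2' : (1 : ℝ) ≤ (q : ℝ) / 2 := by
    rw [le_div_iff₀ two_pos]
    exact_mod_cast (by omega : 1 * 2 ≤ q)
  have hexp : (N : ℝ) / 2 ≤ p := by
    rw [div_le_iff₀ two_pos]
    exact_mod_cast (by omega : N ≤ p * 2)
  calc 1 / ((q - 1).factorial : ℝ) * ((q : ℝ) / 2) ^ ((N : ℝ) / 2)
      ≤ 1 / ((q - 1).factorial : ℝ) * ((q : ℝ) / 2) ^ p := by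
        rw [← Real.rpow_natCast]
        gcongr
    _ ≤ T.card := by
        rw [one_div, inv_mul_le_iff₀ hfac]
        exact hreal
end
end

section
/- For all integers d ≥ 1 and q ≥ 1, the following two statements are equivalent: (i) every continuous map f : Δ_d^{(d+1)(q-1)} → ℝ^d admits a Tverberg partition {S_1, …, S_q} with |S_i| ≤ d+1 for all i (the d-Skeleton Conjecture); (ii) every continuous map F : Δ^{(d+1)(q-1)} → ℝ^d admits a Tverberg partition (the Topological Tverberg Theorem). -/
open scoped BigOperators

noncomputable section

open Set Module

section GeneralPosition

variable {N d : ℕ} {κ : Type*} (S : κ → Finset (Fin (N + 1))) (v : κ → Fin (N + 1))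

/-- The parameter space for families of points `x k` in the faces spanned by `S k`, with a common
value `y`, and with free vectors attached to the vertices outside `range v`. -/
abbrev GenParam (d : ℕ) : Type _ :=
  (∀ k, ↥((S k).erase (v k)) → ℝ) × Euc d × ({j // j ∉ range v} → Euc d)

/-- Barycentric coordinates away from the distinguished vertex `v k`, extended by zero. -/
def freeCoord (e : GenParam S v d) (k : κ) (l : Fin (N + 1)) : ℝ :=
  if h : l ∈ (S k).erase (v k) then e.1 k ⟨l, h⟩ else 0

/-- The barycentric coordinate of the distinguished vertex `v k`. -/
def pivotCoord (e : GenParam S v d) (k : κ) : ℝ :=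
  1 - ∑ l, freeCoord S v e k l

/-- The point with the given free coordinates and coordinate sum one. -/
def paramPoint (e : GenParam S v d) (k : κ) (l : Fin (N + 1)) : ℝ :=
  if l = v k then pivotCoord S v e k else freeCoord S v e k l

open Classical in
/-- The free vectors, extended by zero. -/
def freeVector (e : GenParam S v d) (l : Fin (N + 1)) : Euc d :=
  if h : l ∈ range v then 0 else e.2.2 ⟨l, h⟩

open Classical in
/-- The vectors `A` for which `g (x k) + ∑ l, x k l • A l = y` holds for all `k`. -/
def paramVector (g : (Fin (N + 1) → ℝ) → Euc d) (e : GenParam S v d) (j : Fin (N + 1)) : Euc d :=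
  if h : j ∈ range v then
    (pivotCoord S v e h.choose)⁻¹ •
      (e.2.1 - g (paramPoint S v e h.choose)
        - ∑ l, freeCoord S v e h.choose l • freeVector S v e l)
  else freeVector S v e j

variable {S v}

section Smooth

variable [Fintype κ]

lemma contDiff_freeCoord (k : κ) (l : Fin (N + 1)) :
    ContDiff ℝ 1 fun e : GenParam S v d ↦ freeCoord S v e k l := by
  unfold freeCoord
  split_ifs with h
  · have hk : ContDiff ℝ 1 fun e : GenParam S v d ↦ e.1 k := contDiff_pi.1 contDiff_fst k
    exact contDiff_pi.1 hk ⟨l, h⟩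
  · exact contDiff_const

lemma contDiff_pivotCoord (k : κ) :
    ContDiff ℝ 1 fun e : GenParam S v d ↦ pivotCoord S v e k :=
  contDiff_const.sub (ContDiff.sum fun l _ ↦ contDiff_freeCoord k l)

lemma contDiff_paramPoint (k : κ) :
    ContDiff ℝ 1 fun e : GenParam S v d ↦ paramPoint S v e k := by
  refine contDiff_pi.2 fun l ↦ ?_
  unfold paramPoint
  split_ifs
  · exact contDiff_pivotCoord k
  · exact contDiff_freeCoord k l

lemma contDiff_freeVector (l : Fin (N + 1)) :
    ContDiff ℝ 1 fun e : GenParam S v d ↦ freeVector S v e l := by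
  unfold freeVector
  split_ifs with h
  · exact contDiff_const
  · fun_prop

lemma contDiffOn_paramVector {g : (Fin (N + 1) → ℝ) → Euc d} (hg : ContDiff ℝ 1 g) :
    ContDiffOn ℝ 1 (paramVector S v g) {e | ∀ k, 0 < pivotCoord S v e k} := by
  refine contDiffOn_pi.2 fun j ↦ ?_
  unfold paramVector
  split_ifs with h
  · refine ContDiffOn.smul
      ((contDiff_pivotCoord _).contDiffOn.inv fun e he ↦ (he _).ne') ?_
    refine ContDiff.contDiffOn ((contDiff_snd.fst.sub (hg.comp (contDiff_paramPoint _))).sub ?_)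
    exact ContDiff.sum fun l _ ↦ (contDiff_freeCoord _ l).smul (contDiff_freeVector l)
  · exact (contDiff_freeVector j).contDiffOn

end Smooth

lemma convex_pivotCoord_pos : Convex ℝ {e : GenParam S v d | ∀ k, 0 < pivotCoord S v e k} := by
  intro e he e' he' a b ha hb hab k
  have h : pivotCoord S v (a • e + b • e') k
      = a * pivotCoord S v e k + b * pivotCoord S v e' k := by
    have h' : ∀ l, freeCoord S v (a • e + b • e') k l
        = a * freeCoord S v e k l + b * freeCoord S v e' k l := by
      intro l
      unfold freeCoord
      split_ifs <;> simp
    simp only [pivotCoord, h', Finset.sum_add_distrib, ← Finset.mul_sum]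
    linear_combination -hab
  rw [h]
  exact (convex_Ioi (0 : ℝ)) (he k) (he' k) ha hb hab

lemma finrank_genParam [Fintype κ] (hv : v.Injective) :
    finrank ℝ (GenParam S v d)
      = ∑ k, ((S k).erase (v k)).card + (d + (N + 1 - Fintype.card κ) * d) := by
  classical
  have hc : Fintype.card {j // j ∉ range v} = N + 1 - Fintype.card κ := by
    rw [Fintype.card_subtype_compl, Fintype.card_fin]
    congr 1
    exact (Fintype.card_congr (Equiv.ofInjective v hv)).symm
  simp only [finrank_prod, finrank_pi_fintype, finrank_self, finrank_euclideanSpace_fin,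
    Finset.sum_const, Finset.card_univ, Fintype.card_coe, smul_eq_mul, mul_one, ← hc]

/-- The vectors `A` for which the perturbation `x ↦ g x + ∑ l, x l • A l` of `g` takes a common
value on the faces spanned by the `S k`, at points not vanishing at `v k`. -/
def coincidenceSet (g : (Fin (N + 1) → ℝ) → Euc d) (S : κ → Finset (Fin (N + 1)))
    (v : κ → Fin (N + 1)) : Set (Fin (N + 1) → Euc d) :=
  {A | ∃ (y : Euc d) (x : κ → Fin (N + 1) → ℝ), ∀ k,
    x k ∈ simpFace (S k) ∧ 0 < x k (v k) ∧ g (x k) + ∑ l, x k l • A l = y}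

lemma coincidenceSet_subset_image (hS : Pairwise fun k k' ↦ Disjoint (S k) (S k'))
    (hvS : ∀ k, v k ∈ S k) (hv : v.Injective) (g : (Fin (N + 1) → ℝ) → Euc d) :
    coincidenceSet g S v ⊆ paramVector S v g '' {e | ∀ k, 0 < pivotCoord S v e k} := by
  rintro A ⟨y, x, hx⟩
  have hmem : ∀ k l, l ∈ S k → l ∈ range v → l = v k := by
    rintro k _ hl ⟨k', rfl⟩
    by_contra hne
    have hkk : k' ≠ k := fun h ↦ hne (by rw [h])
    exact Finset.disjoint_left.1 (hS hkk) (hvS k') hl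
  let e : GenParam S v d := ⟨fun k l ↦ x k l, y, fun j ↦ A j⟩
  have hfree : ∀ k l, l ≠ v k → freeCoord S v e k l = x k l := by
    intro k l hl
    unfold freeCoord
    split_ifs with h
    · rfl
    · exact ((hx k).1.2 l fun h' ↦ h (Finset.mem_erase.2 ⟨hl, h'⟩)).symm
  have hfree0 : ∀ k, freeCoord S v e k (v k) = 0 := fun k ↦ by simp [freeCoord]
  have hpivot : ∀ k, pivotCoord S v e k = x k (v k) := by
    intro k
    have h1 := (hx k).1.1.2
    rw [← Finset.add_sum_erase _ _ (Finset.mem_univ (v k))] at h1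
    rw [pivotCoord, ← Finset.add_sum_erase _ _ (Finset.mem_univ (v k)), hfree0,
      Finset.sum_congr rfl fun l hl ↦ hfree k l (Finset.ne_of_mem_erase hl)]
    linarith
  have hpoint : ∀ k, paramPoint S v e k = x k := by
    intro k
    ext l
    unfold paramPoint
    split_ifs with h
    · rw [hpivot, h]
    · exact hfree k l h
  refine ⟨e, fun k ↦ (hpivot k).symm ▸ (hx k).2.1, ?_⟩
  ext1 j
  unfold paramVector
  split_ifs with h
  · obtain ⟨k, rfl⟩ := h
    generalize_proofs hk
    have hck : hk.choose = k := hv hk.choose_spec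
    rw [hck, hpivot, hpoint]
    have hsum : ∑ l, freeCoord S v e k l • freeVector S v e l
        = ∑ l ∈ Finset.univ.erase (v k), x k l • A l := by
      rw [← Finset.add_sum_erase _ _ (Finset.mem_univ (v k)), hfree0, zero_smul, zero_add]
      refine Finset.sum_congr rfl fun l hl ↦ ?_
      have hl' := Finset.ne_of_mem_erase hl
      rw [hfree k l hl']
      by_cases hlS : l ∈ S k
      · have : l ∉ range v := fun h ↦ hl' (hmem k l hlS h)
        simp [freeVector, this, e]
      · simp [(hx k).1.2 l hlS]
    have h2 := (hx k).2.2
    rw [← Finset.add_sum_erase _ _ (Finset.mem_univ (v k))] at h2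
    rw [hsum, inv_smul_eq_iff₀ (hx k).2.1.ne']
    change y - _ - _ = _
    rw [← h2]
    abel
  · simp [freeVector, h, e]

lemma dimH_coincidenceSet_le [Fintype κ] (hS : Pairwise fun k k' ↦ Disjoint (S k) (S k'))
    (hvS : ∀ k, v k ∈ S k) {g : (Fin (N + 1) → ℝ) → Euc d} (hg : ContDiff ℝ 1 g)
    (hcard : ∑ k, (S k).card + d < Fintype.card κ * (d + 1)) :
    dimH (coincidenceSet g S v) ≤ ((N + 1) * d - 1 : ℕ) := by
  have hv : v.Injective := by
    intro k k' h
    by_contra hne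
    exact Finset.disjoint_left.1 (hS hne) (hvS k) (h ▸ hvS k')
  have hsum : ∑ k, ((S k).erase (v k)).card + Fintype.card κ = ∑ k, (S k).card := by
    rw [← Finset.card_univ, Finset.card_eq_sum_ones, ← Finset.sum_add_distrib]
    exact Finset.sum_congr rfl fun k _ ↦ Finset.card_erase_add_one (hvS k)
  have hκ : Fintype.card κ ≤ N + 1 := by simpa using Fintype.card_le_of_injective v hv
  have hrank : finrank ℝ (GenParam S v d) ≤ (N + 1) * d - 1 := by
    rw [finrank_genParam hv]
    obtain ⟨r, hr⟩ := Nat.exists_eq_add_of_le hκ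
    have hr' : N + 1 - Fintype.card κ = r := by omega
    have hmul : (N + 1) * d = (Fintype.card κ + r) * d := by rw [hr]
    rw [hr', hmul]
    refine Nat.le_sub_one_of_lt ?_
    nlinarith
  calc dimH (coincidenceSet g S v)
      ≤ dimH (paramVector S v g '' {e | ∀ k, 0 < pivotCoord S v e k}) :=
        dimH_mono (coincidenceSet_subset_image hS hvS hv g)
    _ ≤ dimH {e : GenParam S v d | ∀ k, 0 < pivotCoord S v e k} :=
        (contDiffOn_paramVector hg).dimH_image_le convex_pivotCoord_pos subset_rfl
    _ ≤ dimH (univ : Set (GenParam S v d)) := dimH_mono (subset_univ _)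
    _ = finrank ℝ (GenParam S v d) := Real.dimH_univ_eq_finrank _
    _ ≤ ((N + 1) * d - 1 : ℕ) := by exact_mod_cast hrank

/-- A `C¹` map has arbitrarily small linear perturbations for which disjoint faces of too small
total dimension have no common value. -/
lemma exists_small_generic_perturbation (hd : 1 ≤ d) {g : (Fin (N + 1) → ℝ) → Euc d}
    (hg : ContDiff ℝ 1 g) {ε : ℝ} (hε : 0 < ε) :
    ∃ A : Fin (N + 1) → Euc d, (∀ i, ‖A i‖ < ε) ∧
      ∀ Q : Finset (Finset (Fin (N + 1))), (∀ S ∈ Q, ∀ T ∈ Q, S ≠ T → Disjoint S T) →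
        ∑ S ∈ Q, S.card + d < Q.card * (d + 1) →
        ¬ (⋂ S ∈ Q, (fun x ↦ g x + ∑ l, x l • A l) '' simpFace S).Nonempty := by
  let bad : Set (Fin (N + 1) → Euc d) :=
    ⋃ (Q : Finset (Finset (Fin (N + 1)))) (v : Q → Fin (N + 1))
      (_ : (∀ S ∈ Q, ∀ T ∈ Q, S ≠ T → Disjoint S T) ∧
        ∑ S ∈ Q, S.card + d < Q.card * (d + 1) ∧ ∀ S : Q, v S ∈ S.1),
      coincidenceSet g (fun S : Q ↦ S.1) v
  have hdim : dimH bad ≤ ((N + 1) * d - 1 : ℕ) := by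
    simp only [bad, dimH_iUnion]
    refine iSup_le fun Q ↦ iSup_le fun v ↦ iSup_le fun h ↦ ?_
    refine dimH_coincidenceSet_le (fun S T hST ↦ ?_) h.2.2 hg ?_
    · exact h.1 S S.2 T T.2 fun h' ↦ hST (Subtype.ext h')
    · rw [Fintype.card_coe, Finset.sum_coe_sort Q fun S ↦ S.card]
      exact h.2.1
  have hdense : Dense badᶜ := by
    refine dense_compl_of_dimH_lt_finrank (hdim.trans_lt ?_)
    have : finrank ℝ (Fin (N + 1) → Euc d) = (N + 1) * d := by simp [finrank_pi_fintype]
    rw [this]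
    exact_mod_cast Nat.sub_lt (Nat.mul_pos N.succ_pos hd) one_pos
  obtain ⟨A, hA, hAε⟩ := hdense.exists_dist_lt 0 hε
  rw [dist_zero_left] at hAε
  refine ⟨A, fun i ↦ (norm_le_pi_norm A i).trans_lt hAε, fun Q hQ hcard ⟨y, hy⟩ ↦ hA ?_⟩
  simp only [mem_iInter] at hy
  choose! x hx using hy
  have hpos : ∀ S : Q, ∃ i, 0 < x S.1 i := by
    intro S
    by_contra! h
    have h1 := (hx S.1 S.2).1.1.2
    linarith [Finset.sum_nonpos fun i (_ : i ∈ Finset.univ) ↦ h i]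
  choose v hv using hpos
  simp only [bad, mem_iUnion]
  refine ⟨Q, v, ⟨hQ, hcard, fun S ↦ ?_⟩, y, fun S ↦ x S.1, fun S ↦
    ⟨(hx S.1 S.2).1, hv S, (hx S.1 S.2).2⟩⟩
  by_contra h
  exact (hv S).ne' ((hx S.1 S.2).1.2 _ h)

end GeneralPosition

section Simplex

variable {N d : ℕ}

lemma isCompact_simpFace (S : Finset (Fin (N + 1))) : IsCompact (simpFace S) := by
  have h : simpFace S = stdSimplex ℝ (Fin (N + 1)) ∩ {x | ∀ i ∉ S, x i = 0} := rfl
  rw [h]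
  refine (isCompact_stdSimplex ℝ (Fin (N + 1))).inter_right ?_
  simp only [ofPred_forall]
  exact isClosed_iInter fun i ↦ isClosed_iInter fun _ ↦
    isClosed_eq (continuous_apply i) continuous_const

lemma simpFace_subset_skel {k : ℕ} {S : Finset (Fin (N + 1))} (hS : S.card ≤ k + 1) :
    simpFace S ⊆ skel N k := by
  refine fun x hx ↦ ⟨hx.1, ?_⟩
  have h : {i | x i ≠ 0} ⊆ (S : Set (Fin (N + 1))) := fun i hi ↦ by
    by_contra h
    exact hi (hx.2 i h)
  exact ((ncard_le_ncard h S.finite_toSet).trans_eq (ncard_coe_finset S)).trans hS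

lemma skel_eq_iUnion_simpFace (N k : ℕ) :
    skel N k = ⋃ S ∈ {S : Finset (Fin (N + 1)) | S.card ≤ k + 1}, simpFace S := by
  classical
  refine subset_antisymm (fun x hx ↦ ?_) (iUnion₂_subset fun S hS ↦ simpFace_subset_skel hS)
  refine mem_iUnion₂.2 ⟨Finset.univ.filter fun i ↦ x i ≠ 0, ?_, hx.1, fun i hi ↦ ?_⟩
  · have := hx.2
    rwa [← Finset.coe_filter_univ, ncard_coe_finset] at this
  · simpa using hi

lemma isClosed_skel (N k : ℕ) : IsClosed (skel N k) := by
  rw [skel_eq_iUnion_simpFace]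
  exact (toFinite _).isClosed_biUnion fun S _ ↦ (isCompact_simpFace S).isClosed

lemma norm_sum_smul_le_of_mem_stdSimp {x : Fin (N + 1) → ℝ} (hx : x ∈ stdSimp N)
    {A : Fin (N + 1) → Euc d} {ε : ℝ} (hA : ∀ i, ‖A i‖ ≤ ε) : ‖∑ l, x l • A l‖ ≤ ε := by
  calc ‖∑ l, x l • A l‖ ≤ ∑ l, x l * ε := by
        refine norm_sum_le_of_le _ fun l _ ↦ ?_
        rw [norm_smul, Real.norm_of_nonneg (hx.1 l)]
        exact mul_le_mul_of_nonneg_left (hA l) (hx.1 l)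
    _ = ε := by rw [← Finset.sum_mul, hx.2, one_mul]

/-- In a family of `q` disjoint faces of a simplex of dimension `(d + 1) * (q - 1)`, if some face
has dimension exceeding `d`, then the codimensions of the remaining ones add up to more
than `d`. -/
lemma sum_card_filter_add_lt {q : ℕ} (hq : 1 ≤ q)
    {P : Finset (Finset (Fin ((d + 1) * (q - 1) + 1)))} (hP : P.card = q)
    (hdisj : ∀ S ∈ P, ∀ T ∈ P, S ≠ T → Disjoint S T) (hbig : ∃ S ∈ P, d + 1 < S.card) :
    ∑ S ∈ P with S.card ≤ d + 1, S.card + d < (P.filter fun S ↦ S.card ≤ d + 1).card * (d + 1) := by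
  have hsum : ∑ S ∈ P, S.card ≤ (d + 1) * (q - 1) + 1 := by
    rw [← Finset.card_biUnion fun S hS T hT ↦ hdisj S hS T hT]
    simpa using Finset.card_le_univ (P.biUnion fun S ↦ S)
  rw [← Finset.sum_filter_add_sum_filter_not P fun S ↦ S.card ≤ d + 1] at hsum
  have hcard := Finset.card_filter_add_card_filter_not (s := P) fun S ↦ S.card ≤ d + 1
  have hlarge : (P.filter fun S ↦ ¬ S.card ≤ d + 1).card * (d + 2)
      ≤ ∑ S ∈ P with ¬ S.card ≤ d + 1, S.card := by
    rw [← smul_eq_mul]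
    refine Finset.card_nsmul_le_sum _ _ _ fun S hS ↦ ?_
    have := (Finset.mem_filter.1 hS).2
    omega
  have hpos : 0 < (P.filter fun S ↦ ¬ S.card ≤ d + 1).card := by
    obtain ⟨S, hS, hSd⟩ := hbig
    exact Finset.card_pos.2 ⟨S, Finset.mem_filter.2 ⟨hS, not_le.2 hSd⟩⟩
  obtain ⟨r, rfl⟩ := Nat.exists_eq_add_of_le hq
  have hr : (d + 1) * (1 + r - 1) = (d + 1) * r := by rw [Nat.add_sub_cancel_left]
  nlinarith

end Simplex

/-- Finitely many compact sets which have common points up to arbitrarily small errors intersect. -/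
lemma nonempty_biInter_of_forall_cthickening {ι X : Type*} [MetricSpace X] [ProperSpace X]
    {P : Finset ι} (hP : P.Nonempty) {K : ι → Set X} (hK : ∀ i ∈ P, IsCompact (K i))
    (h : ∀ ε > 0, (⋂ i ∈ P, Metric.cthickening ε (K i)).Nonempty) :
    (⋂ i ∈ P, K i).Nonempty := by
  obtain ⟨i₀, hi₀⟩ := hP
  let u : ℕ → ℝ := fun n ↦ 1 / (n + 1)
  let t : ℕ → Set X := fun n ↦ ⋂ i ∈ P, Metric.cthickening (u n) (K i)
  have hclosed : ∀ n, IsClosed (t n) := fun n ↦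
    isClosed_biInter fun i _ ↦ Metric.isClosed_cthickening
  have hcompact : IsCompact (t 0) :=
    (hK i₀ hi₀).cthickening.of_isClosed_subset (hclosed 0) (biInter_subset_of_mem hi₀)
  have hne : (⋂ n, t n).Nonempty := by
    refine IsCompact.nonempty_iInter_of_sequence_nonempty_isCompact_isClosed t (fun n ↦ ?_)
      (fun n ↦ h _ Nat.one_div_pos_of_nat) hcompact hclosed
    refine iInter₂_mono fun i _ ↦ Metric.cthickening_mono ?_ _
    exact Nat.one_div_le_one_div n.le_succ
  refine hne.mono fun y hy ↦ mem_iInter₂.2 fun i hi ↦ ?_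
  rw [← (hK i hi).isClosed.closure_eq, Metric.closure_eq_iInter_cthickening]
  refine mem_iInter₂.2 fun ε hε ↦ ?_
  obtain ⟨n, hn⟩ := exists_nat_one_div_lt hε
  exact Metric.cthickening_mono hn.le _ (mem_iInter₂.1 (mem_iInter.1 hy n) i hi)

/-- If every map of the simplex has a Tverberg partition, then every continuous map has an
approximate one consisting of faces of dimension at most `d`. -/
lemma exists_approximate_tverberg {d q : ℕ} (hd : 1 ≤ d) (hq : 1 ≤ q)
    (H : ∀ F : (Fin ((d+1)*(q-1)+1) → ℝ) → Euc d, ContinuousOn F (stdSimp ((d+1)*(q-1))) →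
      ∃ P : Finset (Finset (Fin ((d+1)*(q-1)+1))), IsTverbergPartition q F P)
    {h : (Fin ((d+1)*(q-1)+1) → ℝ) → Euc d} (hh : Continuous h) {ε : ℝ} (hε : 0 < ε) :
    ∃ P : Finset (Finset (Fin ((d+1)*(q-1)+1))), (P.card = q ∧ (∀ S ∈ P, S.Nonempty) ∧
      (∀ S ∈ P, ∀ T ∈ P, S ≠ T → Disjoint S T) ∧ ∀ S ∈ P, S.card ≤ d + 1) ∧
      (⋂ S ∈ P, Metric.cthickening ε (h '' simpFace S)).Nonempty := by
  obtain ⟨g, hg, hgh, -⟩ := hh.exists_contDiff_approx 1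
    (continuous_const (y := ε / 2)) fun _ ↦ half_pos hε
  obtain ⟨A, hAε, hA⟩ := exists_small_generic_perturbation hd hg (half_pos hε)
  have hcont : Continuous fun x : Fin ((d+1)*(q-1)+1) → ℝ ↦ g x + ∑ l, x l • A l := by
    have := hg.continuous
    fun_prop
  obtain ⟨P, hPq, hPne, hPdisj, hPint⟩ := H _ hcont.continuousOn
  refine ⟨P, ⟨hPq, hPne, hPdisj, ?_⟩, ?_⟩
  · by_contra! hbig
    refine hA _ (fun S hS T hT ↦ hPdisj S (Finset.mem_of_mem_filter S hS) T
      (Finset.mem_of_mem_filter T hT)) (sum_card_filter_add_lt hq hPq hPdisj hbig) ?_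
    exact hPint.mono (biInter_subset_biInter_left fun S hS ↦ Finset.mem_of_mem_filter S hS)
  · refine hPint.mono (iInter₂_mono fun S _ ↦ ?_)
    rintro _ ⟨x, hx, rfl⟩
    refine Metric.mem_cthickening_of_dist_le _ (h x) _ _ (mem_image_of_mem h hx) ?_
    have h1 := (hgh x).le
    have h2 := norm_sum_smul_le_of_mem_stdSimp hx.1 fun i ↦ (hAε i).le
    rw [dist_eq_norm] at h1 ⊢
    calc ‖g x + ∑ l, x l • A l - h x‖ = ‖(g x - h x) + ∑ l, x l • A l‖ := by congr 1; abel
      _ ≤ ‖g x - h x‖ + ‖∑ l, x l • A l‖ := norm_add_le _ _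
      _ ≤ ε := by linarith

/-- The `d`-Skeleton Conjecture is equivalent to the Topological Tverberg Theorem. -/
theorem dSkeleton_iff_topologicalTverberg (d q : ℕ) (hd : 1 ≤ d) (hq : 1 ≤ q) :
    (∀ f : (Fin ((d+1)*(q-1)+1) → ℝ) → Euc d,
      ContinuousOn f (skel ((d+1)*(q-1)) d) →
      ∃ P : Finset (Finset (Fin ((d+1)*(q-1)+1))),
        IsTverbergPartition q f P ∧ ∀ S ∈ P, S.card ≤ d + 1) ↔
    (∀ F : (Fin ((d+1)*(q-1)+1) → ℝ) → Euc d,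
      ContinuousOn F (stdSimp ((d+1)*(q-1))) →
      ∃ P : Finset (Finset (Fin ((d+1)*(q-1)+1))), IsTverbergPartition q F P) := by
  constructor
  · intro H F hF
    obtain ⟨P, hP, -⟩ := H F (hF.mono fun x hx ↦ hx.1)
    exact ⟨P, hP⟩
  · intro H f hf
    obtain ⟨h, hh⟩ := ContinuousMap.exists_restrict_eq (isClosed_skel _ _)
      ⟨_, continuousOn_iff_continuous_domRestrict.1 hf⟩
    have hfh : ∀ x ∈ skel ((d+1)*(q-1)) d, h x = f x := fun x hx ↦
      congrArg (fun φ ↦ φ ⟨x, hx⟩) hh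
    choose P hP hPint using fun n : ℕ ↦
      exists_approximate_tverberg hd hq H h.continuous (Nat.one_div_pos_of_nat (α := ℝ) (n := n))
    obtain ⟨P₀, hP₀⟩ := Finite.exists_infinite_fiber P
    rw [infinite_coe_iff] at hP₀
    obtain ⟨n₀, rfl⟩ := hP₀.nonempty
    obtain ⟨hcard, hne, hdisj, hsmall⟩ := hP n₀
    refine ⟨P n₀, ⟨hcard, hne, hdisj, ?_⟩, hsmall⟩
    have himage : ∀ S ∈ P n₀, f '' simpFace S = h '' simpFace S := fun S hS ↦
      image_congr fun x hx ↦ (hfh x (simpFace_subset_skel (hsmall S hS) hx)).symm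
    rw [iInter₂_congr himage]
    refine nonempty_biInter_of_forall_cthickening (Finset.card_pos.1 (by omega))
      (fun S _ ↦ (isCompact_simpFace S).image h.continuous) fun ε hε ↦ ?_
    obtain ⟨m, hm⟩ := exists_nat_one_div_lt hε
    obtain ⟨n, hn, hmn⟩ := hP₀.exists_gt m
    have hPn : P n = P n₀ := hn
    refine (hPn ▸ hPint n).mono (iInter₂_mono fun S _ ↦ Metric.cthickening_mono ?_ _)
    exact (Nat.one_div_le_one_div hmn.le).trans hm.le
end
end
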